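/- arXiv:hep-th/9407124 — 7 statements merged into one kernel-verified Lean document; each statement's English description precedes it below -/
import Mathlib

section
/- Let R be a (not necessarily commutative) unital ring, and let (S_n)_{n≥0}, (Λ_n)_{n≥0}, (Ψ_n)_{n≥1} be sequences in R with S_0 = Λ_0 = 1 satisfying, for every n ≥ 1: Σ_{k=0}^{n} (−1)^{n−k} S_k Λ_{n−k} = 0, Σ_{k=0}^{n} (−1)^{n−k} Λ_k S_{n−k} = 0, and Σ_{k=0}^{n−1} S_k Ψ_{n−k} = n·S_n. Then for every n ≥ 1 the noncommutative Newton formula Σ_{k=0}^{n−1} (−1)^{n−k−1} Ψ_{n−k} Λ_k = n·Λ_n holds. -/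
/-- **Noncommutative Newton formula.**
Let `R` be a (not necessarily commutative) unital ring and `S`, `Λ`, `Ψ` sequences in `R`
with `S 0 = Λ 0 = 1`, satisfying for every `n ≥ 1`:
`∑_{k=0}^{n} (−1)^{n−k} S_k Λ_{n−k} = 0`, `∑_{k=0}^{n} (−1)^{n−k} Λ_k S_{n−k} = 0`, and
`∑_{k=0}^{n−1} S_k Ψ_{n−k} = n • S_n`.  Then for every `n ≥ 1`,
`∑_{k=0}^{n−1} (−1)^{n−k−1} Ψ_{n−k} Λ_k = n • Λ_n`. -/
theorem noncommutative_newton_formula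
    {R : Type*} [Ring R] (S Λ Ψ : ℕ → R)
    (hS0 : S 0 = 1) (hΛ0 : Λ 0 = 1)
    (hSΛ : ∀ n, 1 ≤ n →
      ∑ k ∈ Finset.range (n + 1), (-1 : R) ^ (n - k) * S k * Λ (n - k) = 0)
    (hΛS : ∀ n, 1 ≤ n →
      ∑ k ∈ Finset.range (n + 1), (-1 : R) ^ (n - k) * Λ k * S (n - k) = 0)
    (hNewtonS : ∀ n, 1 ≤ n →
      ∑ k ∈ Finset.range n, S k * Ψ (n - k) = n • S n) :
    ∀ n, 1 ≤ n →
      ∑ k ∈ Finset.range n, (-1 : R) ^ (n - k - 1) * Ψ (n - k) * Λ k = n • Λ n := by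
  classical
  -- signs
  have sq : ∀ m : ℕ, (-1 : R) ^ m * (-1) ^ m = 1 := fun m => by
    rw [← (Commute.refl (-1 : R)).mul_pow]; simp
  have sc : ∀ (m : ℕ) (x : R), x * (-1 : R) ^ m = (-1) ^ m * x := fun m x =>
    (((Commute.neg_one_left x).pow_left m).eq).symm
  have sgn : ∀ n k : ℕ, k ≤ n → (-1 : R) ^ k = (-1) ^ n * (-1) ^ (n - k) := fun n k h => by
    obtain ⟨d, rfl⟩ := Nat.exists_eq_add_of_le h
    rw [Nat.add_sub_cancel_left, pow_add, mul_assoc, sq, mul_one]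
  let s : PowerSeries R := PowerSeries.mk S
  let l : PowerSeries R := PowerSeries.mk (fun n => (-1) ^ n * Λ n)
  let p : PowerSeries R := PowerSeries.mk (fun n => if n = 0 then 0 else Ψ n)
  let D : PowerSeries R → PowerSeries R := fun f =>
    PowerSeries.mk (fun n => n • PowerSeries.coeff n f)
  have hD : ∀ f g, D (f * g) = D f * g + f * D g := by
    intro f g
    ext n
    simp only [D, PowerSeries.coeff_mk, map_add, PowerSeries.coeff_mul, Finset.smul_sum]
    rw [← Finset.sum_add_distrib]
    refine Finset.sum_congr rfl fun x hx => ?_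
    rw [← Finset.HasAntidiagonal.mem_antidiagonal.mp hx, add_smul, smul_mul_assoc, mul_smul_comm]
  have hsl : s * l = 1 := by
    ext n
    rw [PowerSeries.coeff_mul, Finset.Nat.sum_antidiagonal_eq_sum_range_succ_mk,
      PowerSeries.coeff_one]
    simp only [s, l, PowerSeries.coeff_mk]
    split_ifs with h
    · subst h; simp [hS0, hΛ0]
    · rw [← hSΛ n (by omega)]
      refine Finset.sum_congr rfl fun k _ => ?_
      rw [← mul_assoc, sc]
  have hls : l * s = 1 := by
    ext n
    rw [PowerSeries.coeff_mul, Finset.Nat.sum_antidiagonal_eq_sum_range_succ_mk,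
      PowerSeries.coeff_one]
    simp only [s, l, PowerSeries.coeff_mk]
    split_ifs with h
    · subst h; simp [hS0, hΛ0]
    · rw [← mul_zero ((-1 : R) ^ n), ← hΛS n (by omega), Finset.mul_sum]
      refine Finset.sum_congr rfl fun k hk => ?_
      rw [sgn n k (by simp at hk; omega)]
      simp only [mul_assoc]
  have hsp : D s = s * p := by
    ext n
    rw [PowerSeries.coeff_mul, Finset.Nat.sum_antidiagonal_eq_sum_range_succ_mk,
      Finset.sum_range_succ]
    simp only [s, p, D, PowerSeries.coeff_mk]
    rcases Nat.eq_zero_or_pos n with h | h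
    · subst h; simp
    · rw [← hNewtonS n h]
      simp only [Nat.sub_self, if_true, mul_zero, add_zero]
      refine Finset.sum_congr rfl fun k hk => ?_
      rw [if_neg (by simp at hk; omega)]
  have hD1 : D 1 = 0 := by
    ext n
    simp only [D, PowerSeries.coeff_mk, PowerSeries.coeff_one, map_zero]
    split_ifs with h <;> simp [h]
  have key : p * l + D l = 0 := by
    have h := hD s l
    rw [hsl, hD1, hsp, mul_assoc, ← mul_add] at h
    have h2 := congrArg (fun x => l * x) h
    simp only [mul_zero] at h2
    rw [← mul_assoc, hls, one_mul] at h2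
    exact h2.symm
  intro n hn
  have h := congrArg (PowerSeries.coeff n) key
  rw [map_add, PowerSeries.coeff_mul, ← Finset.Nat.sum_antidiagonal_swap,
    Finset.Nat.sum_antidiagonal_eq_sum_range_succ_mk, Finset.sum_range_succ] at h
  simp only [p, l, D, PowerSeries.coeff_mk, Prod.swap, Nat.sub_self, if_true, zero_mul, add_zero,
    map_zero] at h
  have h3 : n • Λ n = (-1) ^ n * (n • ((-1) ^ n * Λ n)) := by
    rw [mul_smul_comm, ← mul_assoc, sq, one_mul]
  rw [h3, ← neg_eq_of_add_eq_zero_right h, mul_neg, Finset.mul_sum, ← Finset.sum_neg_distrib]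
  refine Finset.sum_congr rfl fun k hk => ?_
  have hk' : k < n := by simpa using hk
  rw [if_neg (by omega), sgn n k hk'.le, ← mul_assoc (Ψ _), ← mul_assoc (Ψ _), sc n,
    mul_assoc ((-1 : R) ^ n) (Ψ _), sc (n - k), ← mul_assoc, ← mul_assoc, sq, one_mul]
  obtain ⟨d, hd⟩ : ∃ d, n - k = d + 1 := ⟨n - k - 1, by omega⟩
  rw [hd, pow_succ]
  simp
end

section
/- Let F be the free associative algebra over ℚ on noncommuting generators Ψ₁, Ψ₂, Ψ₃, …. Define S_n ∈ F by S₀ = 1 and the recursion n·S_n = Σ_{k=0}^{n−1} S_k Ψ_{n−k} for n ≥ 1, and define Λ_n := Σ_{|J|=n} (−1)^{n−ℓ(J)} S^J. Let Δ : F → F ⊗_ℚ F be the unique ℚ-algebra homomorphism with Δ(Ψ_k) = Ψ_k ⊗ 1 + 1 ⊗ Ψ_k for every k ≥ 1. Then for every k ≥ 0: Δ(S_k) = Σ_{i=0}^{k} S_i ⊗ S_{k−i} and Δ(Λ_k) = Σ_{i=0}^{k} Λ_i ⊗ Λ_{k−i}; that is, the complete and elementary noncommutative symmetric functions form sequences of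 divided powers for the comultiplication making the Ψ_k primitive. -/
open Finset TensorProduct

namespace NCSF1

noncomputable section

/-- `F = ℚ⟨Ψ₁,Ψ₂,Ψ₃,…⟩`, the free associative algebra over `ℚ` on countably many
noncommuting generators, the generator of index `n : ℕ` representing `Ψ (n+1)`. -/
abbrev F : Type := FreeAlgebra ℚ ℕ

/-- The noncommuting generators `Ψ₁, Ψ₂, …` (with junk value `Ψ 0 = 0`). -/
def Ψ : ℕ → F
  | 0 => 0
  | n + 1 => FreeAlgebra.ι ℚ n

/-- `S^J = S_{j₁} ⋯ S_{j_s}` for a sequence `S` and a list `J = [j₁,…,j_s]`. -/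
def SProd (S : ℕ → F) (L : List ℕ) : F := (L.map S).prod

/-- The elementary functions `Λ_n = ∑_{|J|=n} (−1)^{n−ℓ(J)} S^J` associated with the
complete functions `S`. -/
def Lam (S : ℕ → F) (n : ℕ) : F :=
  ∑ J : Composition n, ((-1 : ℚ) ^ (n - J.length)) • SProd S J.blocks

/-- `Λ^I = Λ_{i₁} ⋯ Λ_{i_r}`. -/
def LamProd (S : ℕ → F) (L : List ℕ) : F := (L.map (Lam S)).prod

theorem lam_zero (S : ℕ → F) : Lam S 0 = 1 := by
  unfold Lam
  rw [Fintype.sum_eq_single (default : Composition 0)]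
  · have h : (default : Composition 0).blocks = [] := by
      rw [Composition.blocks_eq_nil]
    simp [SProd, h]
  · intro c hc
    refine absurd (Composition.ext ?_) hc
    rw [(Composition.blocks_eq_nil _).2 rfl, (Composition.blocks_eq_nil _).2 rfl]

theorem lam_succ (S : ℕ → F) (n : ℕ) :
    Lam S (n + 1) = ∑ p ∈ antidiagonal n, (-1 : ℚ) ^ p.1 • (S (p.1 + 1) * Lam S p.2) := by
  unfold Lam
  simp_rw [Finset.mul_sum, Finset.smul_sum]
  rw [Finset.sum_sigma']
  symm
  refine Finset.sum_bij (fun x hx => (⟨(x.1.1 + 1) :: x.2.blocks, ?_, ?_⟩ : Composition (n + 1)))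
    ?_ ?_ ?_ ?_
  · intro i hi
    rcases List.mem_cons.1 hi with h | h
    · omega
    · exact x.2.blocks_pos h
  · simp only [Finset.mem_sigma, HasAntidiagonal.mem_antidiagonal] at hx
    simp only [List.sum_cons, x.2.blocks_sum]
    omega
  · intros; simp
  · rintro ⟨⟨a, b⟩, c⟩ h ⟨⟨a', b'⟩, c'⟩ h' heq
    simp only [Finset.mem_sigma, HasAntidiagonal.mem_antidiagonal] at h h'
    simp only [Composition.mk.injEq, List.cons.injEq] at heq
    obtain ⟨h1, h2⟩ := heq
    obtain rfl : a = a' := by omega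
    obtain rfl : b = b' := by omega
    obtain rfl : c = c' := Composition.ext h2
    rfl
  · rintro ⟨L, hp, hs⟩ -
    rcases L with _ | ⟨a, L⟩
    · simp at hs
    · have ha : 0 < a := hp (by simp)
      simp only [List.sum_cons] at hs
      refine ⟨⟨(a - 1, L.sum), ⟨L, fun h => hp (List.mem_cons_of_mem _ h), rfl⟩⟩, ?_, ?_⟩
      · simp only [Finset.mem_sigma, HasAntidiagonal.mem_antidiagonal, mem_univ, and_true]
        omega
      · apply Composition.ext
        change (a - 1 + 1) :: L = a :: L
        rw [Nat.sub_add_cancel ha]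
  · rintro ⟨⟨a, b⟩, c⟩ h
    simp only [Finset.mem_sigma, HasAntidiagonal.mem_antidiagonal, mem_univ, and_true] at h
    have hl := c.length_le
    simp only [SProd, List.map_cons, List.prod_cons, mul_smul_comm, smul_smul, ← pow_add]
    congr 2
    simp only [Composition.length, List.length_cons] at hl ⊢
    omega

theorem SL (S : ℕ → F) (hS0 : S 0 = 1) :
    (PowerSeries.mk fun n => (-1 : ℚ) ^ n • S n) * PowerSeries.mk (Lam S) = 1 := by
  ext n
  rw [PowerSeries.coeff_mul, PowerSeries.coeff_one]
  simp only [PowerSeries.coeff_mk]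
  cases n with
  | zero => simp [hS0, lam_zero]
  | succ n =>
    rw [Finset.Nat.sum_antidiagonal_succ]
    simp only [hS0, lam_succ]
    simp only [pow_zero, one_smul, one_mul, smul_mul_assoc, ← Finset.sum_add_distrib, pow_succ]
    simp

/-- Uniqueness for the Newton-type recursion. -/
theorem newton_unique {A : Type*} [Ring A] [Algebra ℚ A] (a b ψ : ℕ → A) (h0 : a 0 = b 0)
    (ha : ∀ n : ℕ, 1 ≤ n → (n : ℚ) • a n = ∑ k ∈ range n, a k * ψ (n - k))
    (hb : ∀ n : ℕ, 1 ≤ n → (n : ℚ) • b n = ∑ k ∈ range n, b k * ψ (n - k)) (n : ℕ) : a n = b n := by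
  induction n using Nat.strong_induction_on with
  | _ n ih =>
    rcases Nat.eq_zero_or_pos n with rfl | hn
    · exact h0
    · have hq : (n : ℚ) ≠ 0 := by exact_mod_cast hn.ne'
      refine smul_right_injective A hq ?_
      simp only
      rw [ha n hn, hb n hn]
      exact Finset.sum_congr rfl fun k hk => by rw [ih k (mem_range.1 hk)]

/-- The Euler operator on power series. -/
def eulerD {A : Type*} [Ring A] [Algebra ℚ A] (p : PowerSeries A) : PowerSeries A :=
  PowerSeries.mk fun n => (n : ℚ) • PowerSeries.coeff n p

theorem eulerD_mul {A : Type*} [Ring A] [Algebra ℚ A] (p q : PowerSeries A) :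
    eulerD (p * q) = eulerD p * q + p * eulerD q := by
  ext n
  simp only [eulerD, PowerSeries.coeff_mul, PowerSeries.coeff_mk, map_add, Finset.smul_sum,
    ← Finset.sum_add_distrib]
  refine Finset.sum_congr rfl fun x hx => ?_
  rw [← HasAntidiagonal.mem_antidiagonal.1 hx, smul_mul_assoc, mul_smul_comm, ← add_smul]
  push_cast; rfl

theorem newton_iff {A : Type*} [Ring A] [Algebra ℚ A] (a ψ : ℕ → A) (hψ : ψ 0 = 0) :
    (∀ n : ℕ, 1 ≤ n → (n : ℚ) • a n = ∑ k ∈ range n, a k * ψ (n - k)) ↔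
      eulerD (PowerSeries.mk a) = PowerSeries.mk a * PowerSeries.mk ψ := by
  rw [PowerSeries.ext_iff]
  refine forall_congr' fun n => ?_
  simp only [eulerD, PowerSeries.coeff_mul, PowerSeries.coeff_mk]
  rw [Finset.Nat.sum_antidiagonal_eq_sum_range_succ (fun i j => a i * ψ j),
    Finset.sum_range_succ]
  rcases Nat.eq_zero_or_pos n with rfl | hn
  · simp [hψ]
  · have : 1 ≤ n := hn
    simp [hψ, this]

theorem ps_commute {A : Type*} [Ring A] (a b : ℕ → A) (h : ∀ i j, a i * b j = b j * a i) :
    PowerSeries.mk a * PowerSeries.mk b = PowerSeries.mk b * PowerSeries.mk a := by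
  ext n
  rw [PowerSeries.coeff_mul, PowerSeries.coeff_mul, ← Finset.Nat.sum_antidiagonal_swap]
  simp [h]

theorem mk_map {A B : Type*} [Ring A] [Ring B] (f : A →+* B) (a : ℕ → A) :
    PowerSeries.map f (PowerSeries.mk a) = PowerSeries.mk fun n => f (a n) := by
  ext n; simp

theorem mk_tmul (a b : ℕ → F) :
    (PowerSeries.mk fun n => a n ⊗ₜ[ℚ] (1 : F)) * (PowerSeries.mk fun n => (1 : F) ⊗ₜ[ℚ] b n) =
      PowerSeries.mk fun k => ∑ i ∈ range (k + 1), a i ⊗ₜ[ℚ] b (k - i) := by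
  ext n
  simp only [PowerSeries.coeff_mul, PowerSeries.coeff_mk, Algebra.TensorProduct.tmul_mul_tmul,
    one_mul, mul_one]
  rw [Finset.Nat.sum_antidiagonal_eq_sum_range_succ (fun i j => a i ⊗ₜ[ℚ] b j)]

/-- Right inverses of power series with constant coefficient one are unique. -/
theorem rinv_unique {A : Type*} [Ring A] (p q r : PowerSeries A)
    (hp : PowerSeries.constantCoeff p = 1) (hq : p * q = 1) (hr : p * r = 1) : q = r := by
  have h := PowerSeries.invOfUnit_mul p 1 (by simpa using hp)
  exact (left_inv_eq_right_inv h hq).symm.trans (left_inv_eq_right_inv h hr)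


/-- **The complete and elementary noncommutative symmetric functions are sequences of
divided powers** for the comultiplication making the `Ψ_k` primitive: if `S` is defined
by `S 0 = 1` and the recursion `n·S_n = ∑_{k=0}^{n−1} S_k Ψ_{n−k}`, and if
`Δ : F → F ⊗ F` is the (unique) `ℚ`-algebra homomorphism with
`Δ(Ψ_k) = Ψ_k ⊗ 1 + 1 ⊗ Ψ_k` for all `k ≥ 1`, then for every `k`,
`Δ(S_k) = ∑_{i=0}^{k} S_i ⊗ S_{k−i}` and `Δ(Λ_k) = ∑_{i=0}^{k} Λ_i ⊗ Λ_{k−i}`. -/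
theorem divided_powers_S_and_Lambda
    (S : ℕ → F) (hS0 : S 0 = 1)
    (hSrec : ∀ n : ℕ, 1 ≤ n → (n : ℚ) • S n = ∑ k ∈ Finset.range n, S k * Ψ (n - k))
    (Δ : F →ₐ[ℚ] F ⊗[ℚ] F)
    (hΔ : ∀ k : ℕ, 1 ≤ k → Δ (Ψ k) = Ψ k ⊗ₜ[ℚ] 1 + 1 ⊗ₜ[ℚ] Ψ k) :
    ∀ k : ℕ,
      Δ (S k) = (∑ i ∈ Finset.range (k + 1), S i ⊗ₜ[ℚ] S (k - i)) ∧
      Δ (Lam S k) = ∑ i ∈ Finset.range (k + 1), Lam S i ⊗ₜ[ℚ] Lam S (k - i) := by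
  have hlr : ∀ (a b : ℕ → F) (i j : ℕ),
      (a i ⊗ₜ[ℚ] (1 : F)) * ((1 : F) ⊗ₜ[ℚ] b j) = ((1 : F) ⊗ₜ[ℚ] b j) * (a i ⊗ₜ[ℚ] (1 : F)) := by
    intro a b i j; simp
  have e1 : ∀ a : ℕ → F, PowerSeries.map
      (Algebra.TensorProduct.includeLeft : F →ₐ[ℚ] F ⊗[ℚ] F).toRingHom (PowerSeries.mk a) =
      PowerSeries.mk fun n => a n ⊗ₜ[ℚ] (1 : F) := fun a => mk_map _ a
  have e2 : ∀ a : ℕ → F, PowerSeries.map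
      (Algebra.TensorProduct.includeRight : F →ₐ[ℚ] F ⊗[ℚ] F).toRingHom (PowerSeries.mk a) =
      PowerSeries.mk fun n => (1 : F) ⊗ₜ[ℚ] a n := fun a => mk_map _ a
  have e3 : ∀ a : ℕ → F, PowerSeries.map Δ.toRingHom (PowerSeries.mk a) =
      PowerSeries.mk fun n => Δ (a n) := fun a => mk_map _ a
  have hΨ0 : Ψ 0 = 0 := rfl
  have hS : ∀ k, Δ (S k) = ∑ i ∈ Finset.range (k + 1), S i ⊗ₜ[ℚ] S (k - i) := by
    refine newton_unique (fun k => Δ (S k)) _ (fun k => Δ (Ψ k)) ?_ ?_ ?_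
    · simp [hS0, Algebra.TensorProduct.one_def]
    · intro n hn
      rw [← map_smul, hSrec n hn, map_sum]
      simp
    · refine (newton_iff (fun k => ∑ i ∈ Finset.range (k + 1), S i ⊗ₜ[ℚ] S (k - i))
        (fun k => Δ (Ψ k)) (by simp [hΨ0])).2 ?_
      rw [← mk_tmul, eulerD_mul]
      have d1 : eulerD (PowerSeries.mk fun n => S n ⊗ₜ[ℚ] (1 : F)) =
          (PowerSeries.mk fun n => S n ⊗ₜ[ℚ] (1 : F)) *
            PowerSeries.mk fun n => Ψ n ⊗ₜ[ℚ] (1 : F) := by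
        refine (newton_iff (fun n => S n ⊗ₜ[ℚ] (1 : F)) (fun n => Ψ n ⊗ₜ[ℚ] (1 : F))
          (by simp [hΨ0])).1 ?_
        intro n hn
        rw [TensorProduct.smul_tmul', hSrec n hn, TensorProduct.sum_tmul]
        simp
      have d2 : eulerD (PowerSeries.mk fun n => (1 : F) ⊗ₜ[ℚ] S n) =
          (PowerSeries.mk fun n => (1 : F) ⊗ₜ[ℚ] S n) *
            PowerSeries.mk fun n => (1 : F) ⊗ₜ[ℚ] Ψ n := by
        refine (newton_iff (fun n => (1 : F) ⊗ₜ[ℚ] S n) (fun n => (1 : F) ⊗ₜ[ℚ] Ψ n)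
          (by simp [hΨ0])).1 ?_
        intro n hn
        rw [← TensorProduct.tmul_smul, hSrec n hn, TensorProduct.tmul_sum]
        simp
      have d3 : (PowerSeries.mk fun n => Δ (Ψ n)) =
          (PowerSeries.mk fun n => Ψ n ⊗ₜ[ℚ] (1 : F)) +
            PowerSeries.mk fun n => (1 : F) ⊗ₜ[ℚ] Ψ n := by
        ext n
        rcases Nat.eq_zero_or_pos n with rfl | hn
        · simp [hΨ0]
        · simp [hΔ n hn]
      rw [d1, d2, d3, mul_add, mul_assoc, ps_commute _ _ (hlr Ψ S)]
      simp only [mul_assoc]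
  have hL := SL S hS0
  set T : ℕ → F := fun n => (-1 : ℚ) ^ n • S n with hT
  have hΔT : ∀ k, Δ (T k) = ∑ i ∈ Finset.range (k + 1), T i ⊗ₜ[ℚ] T (k - i) := by
    intro k
    simp only [hT]
    rw [map_smul, hS, Finset.smul_sum]
    refine Finset.sum_congr rfl fun i hi => ?_
    rw [TensorProduct.smul_tmul_smul, ← pow_add]
    congr 2
    have := mem_range.1 hi
    omega
  have h1 := congrArg (PowerSeries.map
    (Algebra.TensorProduct.includeLeft : F →ₐ[ℚ] F ⊗[ℚ] F).toRingHom) hL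
  have h2 := congrArg (PowerSeries.map
    (Algebra.TensorProduct.includeRight : F →ₐ[ℚ] F ⊗[ℚ] F).toRingHom) hL
  have h3 := congrArg (PowerSeries.map Δ.toRingHom) hL
  rw [map_mul, map_one, e1, e1] at h1
  rw [map_mul, map_one, e2, e2] at h2
  rw [map_mul, map_one, e3, e3] at h3
  have h4 : (PowerSeries.mk fun n => Δ (T n)) * ((PowerSeries.mk fun n => Lam S n ⊗ₜ[ℚ] (1 : F)) *
      (PowerSeries.mk fun n => (1 : F) ⊗ₜ[ℚ] Lam S n)) = 1 := by
    have : (PowerSeries.mk fun n => Δ (T n)) = (PowerSeries.mk fun n => T n ⊗ₜ[ℚ] (1 : F)) *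
        (PowerSeries.mk fun n => (1 : F) ⊗ₜ[ℚ] T n) := by
      rw [mk_tmul]
      exact congrArg PowerSeries.mk (funext hΔT)
    rw [this, ps_commute _ _ (hlr T T), mul_assoc, ← mul_assoc _ _ (PowerSeries.mk fun n => (1 : F) ⊗ₜ[ℚ] Lam S n),
      h1, one_mul, h2]
  rw [mk_tmul] at h4
  have h5 := rinv_unique _ _ _ (by simp [hT, hS0]) h3 h4
  intro k
  refine ⟨hS k, ?_⟩
  simpa using congrArg (PowerSeries.coeff k) h5

end

end NCSF1
end

section
/- Let F be the free associative algebra over ℚ on noncommuting generators Ψ₁, Ψ₂, Ψ₃, …. Define S_n ∈ F by S₀ = 1 and n·S_n = Σ_{k=0}^{n−1} S_k Ψ_{n−k} for n ≥ 1, and set Φ_n := Σ_{|J|=n} (−1)^{ℓ(J)−1}(n/ℓ(J)) S^J (the coefficient of tⁿ in n times the formal logarithm of 1 + Σ_{k≥1} S_k t^k). Let L(Ψ) be the Lie subalgebra of F, with bracket ⁅x,y⁆ = xy − yx, generated by {Ψ_k : k ≥ 1}. Then for every n ≥ 1 the element Φ_n belongs to L(Ψ); moreover Φ_n − Ψ_n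 lies in the derived Lie ideal L²(Ψ), i.e. in the ℚ-linear span of the commutators ⁅x,y⁆ with x, y ∈ L(Ψ). -/
open Finset

namespace NCSF2

noncomputable section

attribute [local instance 100] LieRing.ofAssociativeRing

/-- `F = ℚ⟨Ψ₁,Ψ₂,Ψ₃,…⟩`, the free associative algebra over `ℚ` on countably many
noncommuting generators, the generator of index `n : ℕ` representing `Ψ (n+1)`. -/
abbrev F : Type := FreeAlgebra ℚ ℕ

/-- The noncommuting generators `Ψ₁, Ψ₂, …` (with junk value `Ψ 0 = 0`). -/
def Ψ : ℕ → F
  | 0 => 0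
  | n + 1 => FreeAlgebra.ι ℚ n

/-- `S^J = S_{j₁} ⋯ S_{j_s}`. -/
def SProd (S : ℕ → F) (L : List ℕ) : F := (L.map S).prod

/-- The power sums of the second kind `Φ_n = ∑_{|J|=n} (−1)^{ℓ(J)−1} (n/ℓ(J)) S^J`
(the coefficient of `tⁿ` in `n` times the formal logarithm of `1 + ∑_{k≥1} S_k t^k`). -/
def Phi (S : ℕ → F) (n : ℕ) : F :=
  ∑ J : Composition n,
    ((-1 : ℚ) ^ (J.length - 1) * (n : ℚ) / (J.length : ℚ)) • SProd S J.blocks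

/-- `L(Ψ)`: the Lie subalgebra of `F` (with bracket `⁅x,y⁆ = xy − yx`) generated by the
generators `Ψ_k`, `k ≥ 1`. -/
def LPsi : LieSubalgebra ℚ F :=
  LieSubalgebra.lieSpan ℚ F (Set.range (FreeAlgebra.ι ℚ : ℕ → F))

/-- `L²(Ψ)`: the `ℚ`-linear span of the commutators `⁅x,y⁆` with `x, y ∈ L(Ψ)`. -/
def LPsi2 : Submodule ℚ F :=
  Submodule.span ℚ {z : F | ∃ x ∈ LPsi, ∃ y ∈ LPsi, z = ⁅x, y⁆}

section General

open PowerSeries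

/-- The Euler derivation `t d/dt` on power series. -/
def theta {R : Type*} [Ring R] (f : R⟦X⟧) : R⟦X⟧ := PowerSeries.mk fun n => n • coeff n f

theorem theta_mul {R : Type*} [Ring R] (f g : R⟦X⟧) :
    theta (f * g) = theta f * g + f * theta g := by
  ext n
  simp only [theta, coeff_mk, map_add, coeff_mul, Finset.smul_sum, ← Finset.sum_add_distrib]
  refine Finset.sum_congr rfl fun p hp => ?_
  rw [← Finset.HasAntidiagonal.mem_antidiagonal.1 hp, add_smul, smul_mul_assoc, mul_smul_comm]

theorem theta_one {R : Type*} [Ring R] : theta (1 : R⟦X⟧) = 0 := by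
  ext n
  simp only [theta, coeff_mk, coeff_one, map_zero]
  split_ifs with h <;> simp [h]

theorem theta_C {R : Type*} [Ring R] (a : R) : theta (C a : R⟦X⟧) = 0 := by
  ext n
  simp only [theta, coeff_mk, coeff_C, map_zero]
  split_ifs with h <;> simp [h]

/-- Iterates of `f ↦ T f S - f`. -/
def Bk {R : Type*} [Ring R] (S T P : R⟦X⟧) : ℕ → R⟦X⟧
  | 0 => P
  | k + 1 => T * Bk S T P k * S - Bk S T P k

theorem X_pow_dvd_Bk {R : Type*} [Ring R] (S T P : R⟦X⟧) (hS : constantCoeff S = 1)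
    (hT : constantCoeff T = 1) (k : ℕ) : (X : R⟦X⟧) ^ k ∣ Bk S T P k := by
  induction k with
  | zero => simp
  | succ k ih =>
    obtain ⟨g, hg⟩ := ih
    have h : (X : R⟦X⟧) ∣ T * g * S - g := by
      rw [X_dvd_iff]; simp [hS, hT]
    obtain ⟨h', hh⟩ := h
    refine ⟨h', ?_⟩
    rw [Bk, hg, pow_succ, mul_assoc (X ^ k), ← hh, mul_sub, ← mul_assoc T, ← X_pow_mul (φ := T)]
    simp only [mul_assoc]

theorem sum_Bk_succ {R : Type*} [Ring R] (S T P : R⟦X⟧) (m : ℕ) :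
    ∑ k ∈ range (m + 1), (m + 1).choose (k + 1) • Bk S T P k =
      T * (∑ k ∈ range m, m.choose (k + 1) • Bk S T P k) * S + P := by
  have h1 : ∀ k, T * Bk S T P k * S = Bk S T P (k + 1) + Bk S T P k := by
    intro k; simp [Bk]
  have h2 : T * (∑ k ∈ range m, m.choose (k + 1) • Bk S T P k) * S =
      ∑ k ∈ range m, m.choose (k + 1) • Bk S T P (k + 1) +
      ∑ k ∈ range m, m.choose (k + 1) • Bk S T P k := by
    rw [Finset.mul_sum, Finset.sum_mul, ← Finset.sum_add_distrib]
    refine Finset.sum_congr rfl fun k _ => ?_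
    rw [mul_smul_comm, smul_mul_assoc, h1, smul_add]
  have h3 : ∑ k ∈ range m, m.choose (k + 1) • Bk S T P k =
      ∑ k ∈ range (m + 1), m.choose (k + 1) • Bk S T P k := by
    rw [Finset.sum_range_succ]; simp
  have h4 : ∑ k ∈ range m, m.choose (k + 1) • Bk S T P (k + 1) + P =
      ∑ k ∈ range (m + 1), m.choose k • Bk S T P k := by
    rw [Finset.sum_range_succ']; simp [Bk]
  rw [h2, h3, add_right_comm, h4, ← Finset.sum_add_distrib]
  refine Finset.sum_congr rfl fun k _ => ?_
  rw [Nat.choose_succ_succ, add_smul]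

theorem theta_pow {R : Type*} [Ring R] (S T P : R⟦X⟧) (hST : S * T = 1)
    (hP : theta S = S * P) (m : ℕ) :
    theta (S ^ m) = S ^ m * ∑ k ∈ range m, m.choose (k + 1) • Bk S T P k := by
  induction m with
  | zero => simp [theta_one]
  | succ m ih =>
    rw [sum_Bk_succ, pow_succ, theta_mul, ih, hP, mul_add]
    congr 1
    · simp only [mul_assoc]
      rw [← mul_assoc S T, hST, one_mul]
    · simp only [mul_assoc]

theorem pow_eq_sum {R : Type*} [Ring R] (u : R⟦X⟧) (m : ℕ) :
    (1 + u) ^ m = ∑ k ∈ range (m + 1), m.choose k • u ^ k := by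
  rw [add_comm, (Commute.one_right u).add_pow]
  refine Finset.sum_congr rfl fun k _ => ?_
  simp [nsmul_eq_mul, Nat.cast_comm]

/-- Change of summation range. -/
theorem sum_range_change {M : Type*} [AddCommMonoid M] (f : ℕ → M) (a b : ℕ)
    (ha : ∀ k, a ≤ k → f k = 0) (hb : ∀ k, b ≤ k → f k = 0) :
    ∑ k ∈ range a, f k = ∑ k ∈ range b, f k := by
  rcases le_total a b with h | h
  · refine Finset.sum_subset (Finset.range_mono h) fun k _ hk => ha k (by simpa using hk)
  · refine (Finset.sum_subset (Finset.range_mono h) fun k _ hk => hb k (by simpa using hk)).symm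

theorem coeff_pow_eq {R : Type*} [Ring R] (u : R⟦X⟧) (hu : constantCoeff u = 0) (n N m : ℕ)
    (hn : n ≤ N) :
    coeff n ((1 + u) ^ m) = ∑ k ∈ range (N + 1), m.choose k • coeff n (u ^ k) := by
  rw [pow_eq_sum, map_sum]
  simp only [map_nsmul]
  refine sum_range_change _ _ _ (fun k hk => ?_) fun k hk => ?_
  · rw [Nat.choose_eq_zero_of_lt (by omega), zero_smul]
  · have : (X : R⟦X⟧) ^ k ∣ u ^ k := by
      obtain ⟨v, rfl⟩ := X_dvd_iff.2 hu
      exact ⟨v ^ k, (commute_X v).symm.mul_pow k⟩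
    rw [X_pow_dvd_iff.1 this n (by omega), smul_zero]

theorem coeff_sum_Bk {R : Type*} [Ring R] (S T P : R⟦X⟧) (hS : constantCoeff S = 1)
    (hT : constantCoeff T = 1) (n N m : ℕ) (hn : n ≤ N) :
    coeff n (∑ k ∈ range m, m.choose (k + 1) • Bk S T P k) =
      ∑ k ∈ range (N + 1), m.choose (k + 1) • coeff n (Bk S T P k) := by
  rw [map_sum]
  simp only [map_nsmul]
  refine sum_range_change _ _ _ (fun k hk => ?_) fun k hk => ?_
  · rw [Nat.choose_eq_zero_of_lt (by omega), zero_smul]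
  · rw [X_pow_dvd_iff.1 (X_pow_dvd_Bk S T P hS hT k) n (by omega), smul_zero]

theorem exists_weights (d : ℕ) : ∃ w : ℕ → ℚ, ∀ p : Polynomial ℚ, p.natDegree ≤ d →
    ∑ j ∈ range (d + 1), w j * p.eval (j : ℚ) = (Polynomial.derivative p).eval 0 := by
  refine ⟨fun j => (Polynomial.derivative
    (Lagrange.basis (range (d + 1)) (fun i : ℕ => (i : ℚ)) j)).eval 0, fun p hp => ?_⟩
  have h := Lagrange.eq_interpolate (s := range (d + 1)) (v := fun i : ℕ => (i : ℚ)) (f := p)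
    (fun a _ b _ hab => by simpa using hab)
    (by
      rw [Finset.card_range]
      exact lt_of_le_of_lt Polynomial.degree_le_natDegree (by exact_mod_cast Nat.lt_succ_of_le hp))
  conv_rhs => rw [h, Lagrange.interpolate_apply]
  simp [Polynomial.eval_finsetSum, mul_comm]

/-- Binomial polynomial. -/
def bp (k : ℕ) : Polynomial ℚ := Polynomial.C ((k.factorial : ℚ)⁻¹) * descPochhammer ℚ k

theorem bp_eval (k m : ℕ) : (bp k).eval (m : ℚ) = m.choose k := by
  rw [bp, Polynomial.eval_mul, Polynomial.eval_C, descPochhammer_eval_eq_descFactorial,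
    Nat.descFactorial_eq_factorial_mul_choose]
  have : (k.factorial : ℚ) ≠ 0 := by exact_mod_cast k.factorial_ne_zero
  push_cast
  field_simp

theorem bp_natDegree (k : ℕ) : (bp k).natDegree ≤ k := by
  refine (Polynomial.natDegree_C_mul_le _ _).trans ?_
  rw [descPochhammer_natDegree]

theorem bp_zero : bp 0 = 1 := by simp [bp]

theorem bp_succ_eval_zero (k : ℕ) : (bp (k + 1)).eval 0 = 0 := by
  have := bp_eval (k + 1) 0
  simpa using this

theorem desc_deriv (k : ℕ) : (Polynomial.derivative (descPochhammer ℚ (k + 1))).eval 0 =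
    (-1) ^ k * (k.factorial : ℚ) := by
  induction k with
  | zero => simp
  | succ k ih =>
    rw [descPochhammer_succ_right, Polynomial.derivative_mul, Polynomial.eval_add,
      Polynomial.eval_mul, Polynomial.eval_mul, ih, descPochhammer_ne_zero_eval_zero ℚ (by omega)]
    simp [Nat.factorial_succ, pow_succ]
    ring

theorem bp_deriv (k : ℕ) : (Polynomial.derivative (bp (k + 1))).eval 0 =
    (-1) ^ k / ((k : ℚ) + 1) := by
  rw [bp, Polynomial.derivative_C_mul, Polynomial.eval_mul, Polynomial.eval_C, desc_deriv,
    Nat.factorial_succ]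
  have : (k.factorial : ℚ) ≠ 0 := by exact_mod_cast k.factorial_ne_zero
  have : (k : ℚ) + 1 ≠ 0 := by positivity
  push_cast
  field_simp

theorem main_identity {R : Type*} [Ring R] [Algebra ℚ R] (u T P : R⟦X⟧)
    (hu : constantCoeff u = 0) (hT : constantCoeff T = 1) (hST : (1 + u) * T = 1)
    (hP : theta (1 + u) = (1 + u) * P) (n : ℕ) :
    ∑ k ∈ range n, ((-1) ^ k / ((k : ℚ) + 1)) • (n • coeff n (u ^ (k + 1))) =
      ∑ l ∈ range (n + 1), ((-1) ^ l / ((l : ℚ) + 1)) • coeff n (Bk (1 + u) T P l) := by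
  have hS : constantCoeff (1 + u) = 1 := by simp [hu]
  have key : ∀ m : ℕ, ∑ k ∈ range (n + 1), (bp k).eval (m : ℚ) • (n • coeff n (u ^ k)) =
      ∑ p ∈ antidiagonal n, ∑ k ∈ range (n + 1), ∑ l ∈ range (n + 1),
        (bp k * bp (l + 1)).eval (m : ℚ) •
          (coeff p.1 (u ^ k) * coeff p.2 (Bk (1 + u) T P l)) := by
    intro m
    have h := congrArg (coeff n) (theta_pow (1 + u) T P hST hP m)
    rw [theta, coeff_mk, coeff_pow_eq u hu n n m le_rfl, coeff_mul] at h
    convert h using 1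
    · rw [Finset.smul_sum]
      refine Finset.sum_congr rfl fun k _ => ?_
      rw [bp_eval, Nat.cast_smul_eq_nsmul, smul_comm]
    · refine Finset.sum_congr rfl fun p hp => ?_
      have hp' := Finset.HasAntidiagonal.mem_antidiagonal.1 hp
      rw [coeff_pow_eq u hu p.1 n m (by omega),
        coeff_sum_Bk (1 + u) T P hS hT p.2 n m (by omega), Finset.sum_mul_sum]
      refine Finset.sum_congr rfl fun k _ => Finset.sum_congr rfl fun l _ => ?_
      rw [Polynomial.eval_mul, bp_eval, bp_eval, mul_smul, Nat.cast_smul_eq_nsmul,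
        Nat.cast_smul_eq_nsmul, smul_mul_assoc, mul_smul_comm]
  obtain ⟨w, hw⟩ := exists_weights (n + (n + 1))
  have key2 : ∑ k ∈ range (n + 1), (Polynomial.derivative (bp k)).eval 0 •
        (n • coeff n (u ^ k)) =
      ∑ p ∈ antidiagonal n, ∑ k ∈ range (n + 1), ∑ l ∈ range (n + 1),
        (Polynomial.derivative (bp k * bp (l + 1))).eval 0 •
          (coeff p.1 (u ^ k) * coeff p.2 (Bk (1 + u) T P l)) := by
    have h : ∑ m ∈ range (n + (n + 1) + 1), w m • (∑ k ∈ range (n + 1),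
        (bp k).eval (m : ℚ) • (n • coeff n (u ^ k))) = _ :=
      Finset.sum_congr rfl fun m _ => by rw [key m]
    simp only [Finset.smul_sum, smul_smul] at h
    rw [Finset.sum_comm, Finset.sum_comm (t := antidiagonal n)] at h
    convert h using 1
    · refine Finset.sum_congr rfl fun k hk => ?_
      have := Finset.mem_range.1 hk
      rw [← Finset.sum_smul, hw _ ((bp_natDegree k).trans (by omega))]
    · refine Finset.sum_congr rfl fun p _ => ?_
      conv_rhs => rw [Finset.sum_comm]
      refine Finset.sum_congr rfl fun k hk => ?_
      conv_rhs => rw [Finset.sum_comm]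
      refine Finset.sum_congr rfl fun l hl => ?_
      have := Finset.mem_range.1 hk
      have := Finset.mem_range.1 hl
      rw [← Finset.sum_smul, hw]
      have h1 := bp_natDegree k
      have h2 := bp_natDegree (l + 1)
      exact Polynomial.natDegree_mul_le.trans (by omega)
  rw [Finset.sum_range_succ'] at key2
  simp only [bp_deriv, bp_zero, Polynomial.derivative_one, Polynomial.eval_zero, zero_smul,
    add_zero] at key2
  rw [key2]
  have h5 : ∀ p ∈ antidiagonal n, ∑ k ∈ range (n + 1), ∑ l ∈ range (n + 1),
        (Polynomial.derivative (bp k * bp (l + 1))).eval 0 •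
          (coeff p.1 (u ^ k) * coeff p.2 (Bk (1 + u) T P l)) =
      ∑ l ∈ range (n + 1), ((-1) ^ l / ((l : ℚ) + 1)) •
          (coeff p.1 (1 : R⟦X⟧) * coeff p.2 (Bk (1 + u) T P l)) := by
    intro p _
    rw [Finset.sum_range_succ', Finset.sum_eq_zero, zero_add]
    · simp [bp_zero, bp_deriv]
    · intro k _
      refine Finset.sum_eq_zero fun l _ => ?_
      simp [Polynomial.derivative_mul, bp_succ_eval_zero]
  rw [Finset.sum_congr rfl h5, Finset.sum_comm]
  refine Finset.sum_congr rfl fun l _ => ?_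
  rw [← Finset.smul_sum, ← coeff_mul, one_mul]

end General

section Comp

open PowerSeries

/-- Lists of `k` positive integers with sum `n`. -/
def comps : ℕ → ℕ → Finset (List ℕ)
  | 0, n => if n = 0 then {[]} else ∅
  | k + 1, n => (antidiagonal n).biUnion fun p =>
      if p.1 = 0 then ∅ else (comps k p.2).image (List.cons p.1)

theorem mem_comps (k n : ℕ) (l : List ℕ) :
    l ∈ comps k n ↔ l.length = k ∧ l.sum = n ∧ ∀ i ∈ l, 0 < i := by
  induction k generalizing n l with
  | zero =>
    rw [comps]
    split_ifs with h
    · subst h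
      cases l <;> simp
    · cases l <;> simp [Ne.symm h]
  | succ k ih =>
    simp only [comps, Finset.mem_biUnion, Finset.HasAntidiagonal.mem_antidiagonal, Prod.exists]
    constructor
    · rintro ⟨a, b, hab, h⟩
      split_ifs at h with ha
      · simp at h
      · obtain ⟨l', hl', rfl⟩ := Finset.mem_image.1 h
        obtain ⟨h1, h2, h3⟩ := (ih _ _).1 hl'
        refine ⟨by simp [h1], by simp [h2, hab], ?_⟩
        intro i hi
        rcases List.mem_cons.1 hi with rfl | hi
        · omega
        · exact h3 i hi
    · rintro ⟨h1, h2, h3⟩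
      cases l with
      | nil => simp at h1
      | cons a l' =>
        have ha := h3 a (by simp)
        refine ⟨a, l'.sum, by simpa using h2, ?_⟩
        rw [if_neg (by omega)]
        refine Finset.mem_image.2 ⟨l', (ih _ _).2 ⟨by simpa using h1, rfl, fun i hi => h3 i (by simp [hi])⟩, rfl⟩

theorem coeff_pow_comps (S : ℕ → F) (u : F⟦X⟧) (hu0 : coeff 0 u = 0)
    (hu : ∀ n, 0 < n → coeff n u = S n) (k n : ℕ) :
    coeff n (u ^ k) = ∑ l ∈ comps k n, SProd S l := by
  induction k generalizing n with
  | zero =>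
    rw [pow_zero, coeff_one, comps]
    split_ifs <;> simp [SProd]
  | succ k ih =>
    rw [pow_succ', coeff_mul, comps, Finset.sum_biUnion]
    · refine Finset.sum_congr rfl fun p _ => ?_
      split_ifs with h
      · rw [h, hu0]; simp
      · rw [Finset.sum_image (fun a _ b _ hab => (List.cons.inj hab).2), ih, hu _ (by omega),
          Finset.mul_sum]
        simp [SProd]
    · intro p hp q hq hpq
      refine Finset.disjoint_left.2 fun l hl hl' => ?_
      dsimp only at hl hl'
      split_ifs at hl hl'
      · simp at hl
      · simp at hl
      · simp at hl'
      · obtain ⟨a, _, rfl⟩ := Finset.mem_image.1 hl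
        obtain ⟨b, _, hb⟩ := Finset.mem_image.1 hl'
        have h1 := (List.cons.inj hb).1
        have h2 := Finset.HasAntidiagonal.mem_antidiagonal.1 (Finset.mem_coe.1 hp)
        have h3 := Finset.HasAntidiagonal.mem_antidiagonal.1 (Finset.mem_coe.1 hq)
        exact hpq (Prod.ext h1.symm (by omega))

theorem Phi_eq (S : ℕ → F) (u : F⟦X⟧) (hu0 : coeff 0 u = 0)
    (hu : ∀ n, 0 < n → coeff n u = S n) (n : ℕ) (hn : 1 ≤ n) :
    Phi S n = ∑ k ∈ range n, ((-1) ^ k / ((k : ℚ) + 1)) • (n • coeff n (u ^ (k + 1))) := by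
  have hlen : ∀ J : Composition n, 1 ≤ J.length ∧ J.length ≤ n := fun J =>
    ⟨J.length_pos_of_pos hn, J.length_le⟩
  rw [Phi, ← Finset.sum_fiberwise_of_maps_to (s := Finset.univ) (t := range n)
    (g := fun J : Composition n => J.length - 1)
    (fun J _ => Finset.mem_range.2 (by have := hlen J; omega))]
  refine Finset.sum_congr rfl fun k _ => ?_
  rw [coeff_pow_comps S u hu0 hu, Finset.smul_sum, Finset.smul_sum]
  refine Finset.sum_bij (fun J _ => J.blocks) ?_ ?_ ?_ ?_
  · intro J hJ
    have := hlen J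
    have h := (Finset.mem_filter.1 hJ).2
    exact (mem_comps _ _ _).2 ⟨by rw [J.blocks_length]; omega, J.blocks_sum, fun i hi => J.blocks_pos hi⟩
  · intro J _ J' _ h
    exact Composition.ext h
  · intro l hl
    obtain ⟨h1, h2, h3⟩ := (mem_comps _ _ _).1 hl
    refine ⟨⟨l, fun {i} hi => h3 i hi, h2⟩, ?_, rfl⟩
    simp [Composition.length, h1]
  · intro J hJ
    have := hlen J
    have h := (Finset.mem_filter.1 hJ).2
    have h' : J.length = k + 1 := by omega
    rw [h', ← Nat.cast_smul_eq_nsmul ℚ n, smul_smul]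
    congr 1
    push_cast
    ring

end Comp

section Lie

open PowerSeries

theorem Psi_mem (n : ℕ) : Ψ n ∈ LPsi := by
  cases n with
  | zero => exact LPsi.zero_mem
  | succ n => exact LieSubalgebra.subset_lieSpan ⟨n, rfl⟩

theorem lie_mem2 {x y : F} (hx : x ∈ LPsi) (hy : y ∈ LPsi) : x * y - y * x ∈ LPsi2 :=
  Submodule.subset_span ⟨x, hx, y, hy, rfl⟩

theorem LPsi2_le {x : F} (hx : x ∈ LPsi2) : x ∈ LPsi := by
  have : LPsi2 ≤ LPsi.toSubmodule := by
    refine Submodule.span_le.2 ?_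
    rintro z ⟨x, hx, y, hy, rfl⟩
    exact LPsi.lie_mem hx hy
  exact this hx

theorem conj_C (S T P : F⟦X⟧) (hST : S * T = 1) (hTS : T * S = 1)
    (hS : constantCoeff S = 1) (hT : constantCoeff T = 1)
    (hP : theta S = S * P) (hPL : ∀ n, coeff n P ∈ LPsi) (hP0 : coeff 0 P = 0)
    (y : F) (hy : y ∈ LPsi) (n : ℕ) :
    coeff n (T * C y * S - C y) ∈ LPsi2 := by
  have hT' : theta T = - (P * T) := by
    have h : theta (T * S) = 0 := by rw [hTS, theta_one]
    rw [theta_mul, hP, ← mul_assoc, hTS, one_mul] at h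
    have h2 := congrArg (· * T) h
    simp only [add_mul, mul_assoc, hST, mul_one, zero_mul] at h2
    exact eq_neg_of_add_eq_zero_left h2
  have hth : theta (T * C y * S) = (T * C y * S) * P - P * (T * C y * S) := by
    rw [theta_mul, theta_mul, theta_C, hT', hP]
    simp only [mul_zero, add_zero, neg_mul, mul_assoc]
    abel
  induction n using Nat.strong_induction_on with
  | _ n ih =>
    rcases Nat.eq_zero_or_pos n with rfl | hn
    · have : coeff 0 (T * C y * S - C y) = 0 := by simp [hS, hT]
      rw [this]; exact LPsi2.zero_mem
    · have hz : ∀ i < n, coeff i (T * C y * S) ∈ LPsi := by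
        intro i hi
        have h1 := LPsi2_le (ih i hi)
        have h2 : coeff i (C y : F⟦X⟧) ∈ LPsi := by
          rw [coeff_C]; split_ifs
          · exact hy
          · exact LPsi.zero_mem
        have := LPsi.add_mem h1 h2
        rwa [map_sub, sub_add_cancel] at this
      have h := congrArg (coeff n) hth
      rw [map_sub, coeff_mul n _ P, coeff_mul n P, ← Finset.Nat.sum_antidiagonal_swap (n := n)
        (f := fun p => coeff p.1 P * _), ← Finset.sum_sub_distrib, theta, coeff_mk] at h
      have hmem : n • coeff n (T * C y * S) ∈ LPsi2 := by
        rw [h]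
        refine Submodule.sum_mem _ fun p hp => ?_
        have hp' := Finset.HasAntidiagonal.mem_antidiagonal.1 hp
        by_cases h0 : p.2 = 0
        · simp only [Prod.fst_swap, Prod.snd_swap, h0, hP0, mul_zero, zero_mul, sub_zero]
          exact LPsi2.zero_mem
        · exact lie_mem2 (hz _ (by omega)) (hPL _)
      have hc : coeff n (C y : F⟦X⟧) = 0 := by rw [coeff_C, if_neg (by omega)]
      rw [map_sub, hc, sub_zero]
      rw [← Nat.cast_smul_eq_nsmul ℚ] at hmem
      have hne : (n : ℚ) ≠ 0 := by exact_mod_cast hn.ne'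
      have := LPsi2.smul_mem (n : ℚ)⁻¹ hmem
      rwa [smul_smul, inv_mul_cancel₀ hne, one_smul] at this

theorem conj_mem (S T P : F⟦X⟧) (hST : S * T = 1) (hTS : T * S = 1)
    (hS : constantCoeff S = 1) (hT : constantCoeff T = 1)
    (hP : theta S = S * P) (hPL : ∀ n, coeff n P ∈ LPsi) (hP0 : coeff 0 P = 0)
    (f : F⟦X⟧) (hf : ∀ n, coeff n f ∈ LPsi) (n : ℕ) :
    coeff n (T * f * S - f) ∈ LPsi2 := by
  have hdec : ∀ f : F⟦X⟧, T * f * S - f = X * (T * (PowerSeries.mk fun p => coeff (p + 1) f) * S -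
      (PowerSeries.mk fun p => coeff (p + 1) f)) +
      (T * C (constantCoeff f) * S - C (constantCoeff f)) := by
    intro f
    conv_lhs => rw [eq_X_mul_shift_add_const f]
    rw [mul_add, add_mul, mul_sub, ← mul_assoc T X, ← X_mul (φ := T)]
    simp only [mul_assoc]
    abel
  have hcc : ∀ f : F⟦X⟧, (∀ n, coeff n f ∈ LPsi) → constantCoeff f ∈ LPsi := by
    intro f hf
    rw [← coeff_zero_eq_constantCoeff_apply]; exact hf 0
  induction n generalizing f with
  | zero =>
    have : coeff 0 (T * f * S - f) = 0 := by simp [hS, hT]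
    rw [this]; exact LPsi2.zero_mem
  | succ n ih =>
    rw [hdec, map_add, coeff_succ_X_mul]
    refine LPsi2.add_mem (ih _ fun k => ?_)
      (conj_C S T P hST hTS hS hT hP hPL hP0 _ (hcc f hf) _)
    rw [coeff_mk]; exact hf _

theorem Bk_mem (S T P : F⟦X⟧) (hST : S * T = 1) (hTS : T * S = 1)
    (hS : constantCoeff S = 1) (hT : constantCoeff T = 1)
    (hP : theta S = S * P) (hPL : ∀ n, coeff n P ∈ LPsi) (hP0 : coeff 0 P = 0) (k : ℕ) :
    (∀ n, coeff n (Bk S T P k) ∈ LPsi) ∧ ∀ n, coeff n (Bk S T P (k + 1)) ∈ LPsi2 := by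
  induction k with
  | zero => exact ⟨hPL, conj_mem S T P hST hTS hS hT hP hPL hP0 _ hPL⟩
  | succ k ih =>
    have h : ∀ n, coeff n (Bk S T P (k + 1)) ∈ LPsi := fun n => LPsi2_le (ih.2 n)
    exact ⟨h, conj_mem S T P hST hTS hS hT hP hPL hP0 _ h⟩

end Lie

/-- **The second-kind power sums lie in the free Lie algebra generated by the first-kind
ones**: if `S` is defined by `S 0 = 1` and the recursion
`n·S_n = ∑_{k=0}^{n−1} S_k Ψ_{n−k}`, then for every `n ≥ 1` the element `Φ_n` belongs to
the Lie algebra `L(Ψ)` generated by the `Ψ_k`, and moreover `Φ_n − Ψ_n` lies in the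
derived Lie ideal `L²(Ψ)`. -/
theorem phi_mem_lie_algebra
    (S : ℕ → F) (hS0 : S 0 = 1)
    (hSrec : ∀ n : ℕ, 1 ≤ n → (n : ℚ) • S n = ∑ k ∈ Finset.range n, S k * Ψ (n - k)) :
    ∀ n : ℕ, 1 ≤ n →
      Phi S n ∈ LPsi ∧ Phi S n - Ψ n ∈ LPsi2 := by
  intro n hn
  suffices h : Phi S n - Ψ n ∈ LPsi2 by
    refine ⟨?_, h⟩
    have := LPsi.add_mem (LPsi2_le h) (Psi_mem n)
    rwa [sub_add_cancel] at this
  obtain ⟨u, hu⟩ : ∃ u : PowerSeries F, 1 + u = PowerSeries.mk S :=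
    ⟨PowerSeries.mk S - 1, by abel⟩
  have hu' : u = PowerSeries.mk S - 1 := by rw [← hu]; abel
  have hu0 : PowerSeries.coeff 0 u = 0 := by
    rw [hu', map_sub, PowerSeries.coeff_mk, hS0, PowerSeries.coeff_one, if_pos rfl, sub_self]
  have hun : ∀ n, 0 < n → PowerSeries.coeff n u = S n := by
    intro n hn
    rw [hu', map_sub, PowerSeries.coeff_mk, PowerSeries.coeff_one, if_neg (by omega), sub_zero]
  have huc : PowerSeries.constantCoeff u = 0 := by
    rw [← PowerSeries.coeff_zero_eq_constantCoeff_apply]; exact hu0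
  have hSc : PowerSeries.constantCoeff (1 + u) = ((1 : Fˣ) : F) := by simp [huc]
  have hS1 : PowerSeries.constantCoeff (1 + u) = 1 := by simp [huc]
  obtain ⟨T, hST, hTS⟩ : ∃ T, (1 + u) * T = 1 ∧ T * (1 + u) = 1 :=
    ⟨_, PowerSeries.mul_invOfUnit (1 + u) 1 hSc, PowerSeries.invOfUnit_mul (1 + u) 1 hSc⟩
  have hT : PowerSeries.constantCoeff T = 1 := by
    have := congrArg PowerSeries.constantCoeff hTS
    rwa [map_mul, hS1, mul_one, map_one] at this
  have hP : theta (1 + u) = (1 + u) * PowerSeries.mk Ψ := by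
    rw [hu]
    ext n
    rw [theta, PowerSeries.coeff_mk, PowerSeries.coeff_mul,
      Finset.Nat.sum_antidiagonal_eq_sum_range_succ_mk, Finset.sum_range_succ]
    simp only [PowerSeries.coeff_mk, Nat.sub_self]
    have h0 : Ψ 0 = 0 := rfl
    rw [h0, mul_zero, add_zero]
    rcases Nat.eq_zero_or_pos n with rfl | hn
    · simp
    · rw [← hSrec n hn, Nat.cast_smul_eq_nsmul]
  have hPL : ∀ n, PowerSeries.coeff n (PowerSeries.mk Ψ) ∈ LPsi := by
    intro n; rw [PowerSeries.coeff_mk]; exact Psi_mem n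
  have hP0 : PowerSeries.coeff 0 (PowerSeries.mk Ψ) = 0 := by
    rw [PowerSeries.coeff_mk]; rfl
  rw [Phi_eq S u hu0 hun n hn, main_identity u T _ huc hT hST hP n, Finset.sum_range_succ']
  have h0 : ((-1) ^ 0 / (((0 : ℕ) : ℚ) + 1)) •
      PowerSeries.coeff n (Bk (1 + u) T (PowerSeries.mk Ψ) 0) = Ψ n := by
    simp [Bk]
  rw [h0, add_sub_cancel_right]
  exact Submodule.sum_mem _ fun k _ => LPsi2.smul_mem _
    ((Bk_mem (1 + u) T _ hST hTS hS1 hT hP hPL hP0 k).2 n)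

end

end NCSF2
end

section
/- In Sym, for any two nonempty compositions I = (i₁,…,i_r) and J = (j₁,…,j_s), the noncommutative ribbon Schur functions satisfy the multiplication rule R_I · R_J = R_{I▷J} + R_{I·J}, where I·J := (i₁,…,i_r,j₁,…,j_s) is the concatenation and I▷J := (i₁,…,i_{r−1}, i_r + j₁, j₂,…,j_s). -/
open Finset

namespace NCSF

noncomputable section

/-- `Sym = ℚ⟨S₁,S₂,S₃,…⟩`, the free associative algebra over `ℚ` on countably many
noncommuting generators, the generator of index `n : ℕ` representing `S (n+1)`. -/
abbrev Sym : Type := FreeAlgebra ℚ ℕ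

/-- The complete homogeneous noncommutative symmetric functions: `S 0 = 1` and
`S (n+1)` is the `n`-th generator of the free algebra. -/
def S : ℕ → Sym
  | 0 => 1
  | n + 1 => FreeAlgebra.ι ℚ n

/-- `S^I = S_{i₁} ⋯ S_{i_r}` for a list `I = [i₁, …, i_r]`. -/
def SProd (L : List ℕ) : Sym := (L.map S).prod

/-- The set of partial sums `i₁ + ⋯ + i_k` (`1 ≤ k ≤ length`) of a list. -/
def psums (L : List ℕ) : Finset ℕ :=
  (Finset.range L.length).image fun k => (L.take (k + 1)).sum

/-- The noncommutative ribbon Schur function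
`R_I = ∑_{J ⪯ I} (−1)^{ℓ(I)−ℓ(J)} S^J`, the sum being over the compositions `J`
of `|I|` that are coarser than `I` (every partial sum of `J` is a partial sum of `I`). -/
def Ribbon (L : List ℕ) : Sym :=
  ∑ J : Composition L.sum,
    if psums J.blocks ⊆ psums L then ((-1 : ℚ) ^ (L.length - J.length)) • SProd J.blocks
    else 0

theorem psums_nil : psums [] = ∅ := by simp [psums]

theorem mem_psums_cons (x : ℕ) (M : List ℕ) (y : ℕ) :
    y ∈ psums (x :: M) ↔ y = x ∨ ∃ z ∈ psums M, y = x + z := by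
  simp only [psums, List.length_cons, Finset.mem_image, Finset.mem_range]
  constructor
  · rintro ⟨k, hk, rfl⟩
    rcases k with _ | k
    · left; simp
    · right
      exact ⟨_, ⟨k, by omega, rfl⟩, by simp⟩
  · rintro (rfl | ⟨z, ⟨k, hk, rfl⟩, rfl⟩)
    · exact ⟨0, by omega, by simp⟩
    · exact ⟨k + 1, by omega, by simp⟩

theorem psums_pos (M : List ℕ) (hM : ∀ m ∈ M, 0 < m) (y : ℕ) (hy : y ∈ psums M) : 0 < y := by
  cases M with
  | nil => simp [psums_nil] at hy
  | cons x M =>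
    have := hM x (by simp)
    rw [mem_psums_cons] at hy
    rcases hy with rfl | ⟨z, -, rfl⟩ <;> omega

def Cset : ℕ → List ℕ → Finset (List ℕ)
  | a, [] => {[a]}
  | a, b :: L => (Cset b L).image (fun M => a :: M) ∪ Cset (a + b) L

theorem mem_Cset (L : List ℕ) : ∀ (a : ℕ) (_ : 0 < a) (_ : ∀ l ∈ L, 0 < l) (M : List ℕ),
    M ∈ Cset a L ↔ (∀ m ∈ M, 0 < m) ∧ M.sum = a + L.sum ∧ psums M ⊆ psums (a :: L) := by
  induction L with
  | nil =>
    intro a ha _ M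
    simp only [Cset, Finset.mem_singleton]
    constructor
    · rintro rfl
      simp [ha]
    · rintro ⟨h1, h2, h3⟩
      cases M with
      | nil => simp at h2; omega
      | cons x M =>
        have := h3 ((mem_psums_cons x M x).2 (Or.inl rfl))
        rw [mem_psums_cons] at this
        simp [psums_nil] at this
        subst this
        cases M with
        | nil => rfl
        | cons y M =>
          have := h1 y (by simp)
          simp at h2
          omega
  | cons b L ih =>
    intro a ha hL M
    have hb : 0 < b := hL b (by simp)
    have hL' : ∀ l ∈ L, 0 < l := fun l hl => hL l (by simp [hl])
    simp only [Cset, Finset.mem_union, Finset.mem_image]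
    rw [ih (a + b) (by omega) hL' M]
    cases M with
    | nil => simp; omega
    | cons x M =>
      have e1 : (∃ N ∈ Cset b L, a :: N = x :: M) ↔ x = a ∧ M ∈ Cset b L := by
        constructor
        · rintro ⟨N, hN, h⟩
          simp at h
          exact ⟨h.1.symm, h.2 ▸ hN⟩
        · rintro ⟨rfl, h⟩
          exact ⟨M, h, rfl⟩
      rw [e1, ih b hb hL' M]
      constructor
      · rintro (⟨rfl, h1, h2, h3⟩ | ⟨h1, h2, h3⟩)
        · refine ⟨by simpa using ⟨ha, h1⟩, by simp [h2], ?_⟩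
          intro y hy
          rw [mem_psums_cons] at hy ⊢
          rcases hy with rfl | ⟨z, hz, rfl⟩
          · simp
          · exact Or.inr ⟨z, h3 hz, rfl⟩
        · refine ⟨h1, by simp at h2 ⊢; omega, ?_⟩
          intro y hy
          have := h3 hy
          rw [mem_psums_cons] at this ⊢
          right
          rcases this with rfl | ⟨z, hz, rfl⟩
          · exact ⟨b, by simp [mem_psums_cons], rfl⟩
          · exact ⟨b + z, by rw [mem_psums_cons]; exact Or.inr ⟨z, hz, rfl⟩, by omega⟩
      · rintro ⟨h1, h2, h3⟩
        have hM : ∀ m ∈ M, 0 < m := fun m hm => h1 m (by simp [hm])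
        by_cases hx : x = a
        · subst hx
          left
          refine ⟨rfl, hM, by simpa using h2, ?_⟩
          intro y hy
          have hp := psums_pos M hM y hy
          have := h3 ((mem_psums_cons x M (x + y)).2 (Or.inr ⟨y, hy, rfl⟩))
          rw [mem_psums_cons] at this
          rcases this with h | ⟨z, hz, h⟩
          · omega
          · have : y = z := by omega
            rwa [this]
        · right
          refine ⟨h1, by simp at h2 ⊢; omega, ?_⟩
          have hxa : a < x := by
            have := h3 ((mem_psums_cons x M x).2 (Or.inl rfl))
            rw [mem_psums_cons] at this
            rcases this with h | ⟨z, hz, h⟩ <;> omega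
          intro y hy
          have hxy : x ≤ y := by
            have := (mem_psums_cons x M y).1 hy
            rcases this with h | ⟨z, hz, h⟩ <;> omega
          have := h3 hy
          rw [mem_psums_cons] at this ⊢
          rcases this with h | ⟨z, hz, h⟩
          · omega
          · rw [mem_psums_cons] at hz
            rcases hz with h | ⟨w, hw, h⟩
            · left; omega
            · exact Or.inr ⟨w, hw, by omega⟩

theorem length_Cset (L : List ℕ) : ∀ (a : ℕ), ∀ M ∈ Cset a L, M.length ≤ L.length + 1 := by
  induction L with
  | nil => intro a M hM; simp [Cset] at hM; simp [hM]
  | cons b L ih =>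
    intro a M hM
    simp only [Cset, Finset.mem_union, Finset.mem_image] at hM
    rcases hM with ⟨N, hN, rfl⟩ | hM
    · have := ih b N hN
      simpa using this
    · have := ih _ M hM
      simp; omega

theorem Ribbon_eq_sum (a : ℕ) (L : List ℕ) (ha : 0 < a) (hL : ∀ l ∈ L, 0 < l) :
    Ribbon (a :: L) = ∑ M ∈ Cset a L, ((-1 : ℚ) ^ (L.length + 1 - M.length)) • SProd M := by
  unfold Ribbon
  rw [← Finset.sum_filter]
  refine Finset.sum_bij (fun J _ => J.blocks) ?_ ?_ ?_ ?_
  · intro J hJ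
    rw [mem_Cset L a ha hL]
    exact ⟨fun m hm => J.blocks_pos hm, by simp, (Finset.mem_filter.1 hJ).2⟩
  · intro J _ K _ h
    exact Composition.ext h
  · intro M hM
    rw [mem_Cset L a ha hL] at hM
    exact ⟨⟨M, fun {i} hi => hM.1 i hi, by simpa using hM.2.1⟩, Finset.mem_filter.2 ⟨Finset.mem_univ _, hM.2.2⟩, rfl⟩
  · intro J _
    rfl

theorem Ribbon_single (a : ℕ) (ha : 0 < a) : Ribbon [a] = S a := by
  rw [Ribbon_eq_sum a [] ha (by simp)]
  simp [Cset, SProd]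

theorem Ribbon_cons (a b : ℕ) (L : List ℕ) (ha : 0 < a) (hb : 0 < b) (hL : ∀ l ∈ L, 0 < l) :
    S a * Ribbon (b :: L) = Ribbon ((a + b) :: L) + Ribbon (a :: b :: L) := by
  rw [Ribbon_eq_sum b L hb hL, Ribbon_eq_sum (a + b) L (by omega) hL,
    Ribbon_eq_sum a (b :: L) ha (by simpa using ⟨hb, hL⟩)]
  have hd : Disjoint ((Cset b L).image (fun M => a :: M)) (Cset (a + b) L) := by
    rw [Finset.disjoint_left]
    intro M h1 h2
    obtain ⟨N, hN, rfl⟩ := Finset.mem_image.1 h1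
    rw [mem_Cset L _ (by omega) hL] at h2
    have := h2.2.2 ((mem_psums_cons a N a).2 (Or.inl rfl))
    rw [mem_psums_cons] at this
    rcases this with h | ⟨z, hz, h⟩ <;> omega
  have e : Cset a (b :: L) = (Cset b L).image (fun M => a :: M) ∪ Cset (a + b) L := rfl
  rw [e, Finset.sum_union hd, Finset.sum_image (by intro x _ y _ h; simpa using h)]
  have e2 : ∑ M ∈ Cset (a + b) L, ((-1 : ℚ) ^ ((b :: L).length + 1 - M.length)) • SProd M
      = - ∑ M ∈ Cset (a + b) L, ((-1 : ℚ) ^ (L.length + 1 - M.length)) • SProd M := by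
    rw [← Finset.sum_neg_distrib]
    refine Finset.sum_congr rfl fun M hM => ?_
    have := length_Cset L _ M hM
    have h : (b :: L).length + 1 - M.length = (L.length + 1 - M.length) + 1 := by
      simp; omega
    rw [h, pow_succ]
    simp
  have e3 : ∑ M ∈ Cset b L, ((-1 : ℚ) ^ ((b :: L).length + 1 - (a :: M).length)) • SProd (a :: M)
      = S a * ∑ M ∈ Cset b L, ((-1 : ℚ) ^ (L.length + 1 - M.length)) • SProd M := by
    rw [Finset.mul_sum]
    refine Finset.sum_congr rfl fun M hM => ?_
    simp [SProd]
  rw [e2, e3]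
  abel

theorem ribbon_mul_aux (b : ℕ) (J : List ℕ) (hb : 0 < b) (hJ : ∀ l ∈ J, 0 < l) (I : List ℕ) :
    ∀ (a : ℕ) (_ : 0 < a) (_ : ∀ l ∈ I, 0 < l),
    Ribbon (a :: I) * Ribbon (b :: J) =
      Ribbon ((a :: I).dropLast ++ ((a :: I).getLast (by simp) + b) :: J)
        + Ribbon (a :: I ++ b :: J) := by
  induction I with
  | nil =>
    intro a ha _
    rw [Ribbon_single a ha, Ribbon_cons a b J ha hb hJ]
    rfl
  | cons c I ih =>
    intro a ha hI
    have hc : 0 < c := hI c (by simp)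
    have hI' : ∀ l ∈ I, 0 < l := fun l hl => hI l (by simp [hl])
    have h1 := ih c hc hI'
    have h2 := ih (a + c) (by omega) hI'
    have h3 := eq_sub_of_add_eq' (Ribbon_cons a c I ha hc hI').symm
    have h4 := eq_sub_of_add_eq' (Ribbon_cons a c (I ++ b :: J) ha hc (by
      intro l hl
      simp at hl
      rcases hl with hl | rfl | hl
      exacts [hI' l hl, hb, hJ l hl])).symm
    have h5 : Ribbon ((a :: c :: I).dropLast ++ ((a :: c :: I).getLast (by simp) + b) :: J)
        = S a * Ribbon ((c :: I).dropLast ++ ((c :: I).getLast (by simp) + b) :: J)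
          - Ribbon (((a + c) :: I).dropLast ++ (((a + c) :: I).getLast (by simp) + b) :: J) := by
      cases I with
      | nil =>
        have := eq_sub_of_add_eq' (Ribbon_cons a (c + b) J ha (by omega) hJ).symm
        simpa [add_assoc] using this
      | cons d I =>
        have := eq_sub_of_add_eq' (Ribbon_cons a c
          ((d :: I).dropLast ++ ((d :: I).getLast (by simp) + b) :: J) ha hc (by
            intro l hl
            rw [List.mem_append, List.mem_cons] at hl
            rcases hl with hl | rfl | hl
            exacts [hI' l (List.mem_of_mem_dropLast hl), by omega, hJ l hl])).symm
        simpa using this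
    rw [h5, h3, sub_mul, mul_assoc, h1, h2]
    simp only [List.cons_append] at h4 ⊢
    rw [h4, mul_add]
    abel

/-- **Multiplication rule for noncommutative ribbon Schur functions** (MacMahon's formula):
for nonempty compositions `I = (i₁,…,i_r)` and `J = (j₁,…,j_s)`,
`R_I · R_J = R_{I▷J} + R_{I·J}` where `I·J` is the concatenation and
`I▷J = (i₁,…,i_{r−1}, i_r + j₁, j₂,…,j_s)`. -/
theorem ribbon_mul (I J : List ℕ) (hI : I ≠ []) (hJ : J ≠ [])
    (hIpos : ∀ i ∈ I, 0 < i) (hJpos : ∀ j ∈ J, 0 < j) :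
    Ribbon I * Ribbon J =
      Ribbon (I.dropLast ++ (I.getLast hI + J.head hJ) :: J.tail) + Ribbon (I ++ J) := by
  cases I with
  | nil => exact absurd rfl hI
  | cons a I =>
    cases J with
    | nil => exact absurd rfl hJ
    | cons b J =>
      exact ribbon_mul_aux b J (hJpos b (by simp)) (fun l hl => hJpos l (by simp [hl])) I a
        (hIpos a (by simp)) (fun l hl => hIpos l (by simp [hl]))

end

end NCSF
end

section
/- In Sym, for every n ≥ 1 one has Ψ_n = Σ_{k=0}^{n−1} (−1)^k R_{(1^k, n−k)}, where (1^k, n−k) denotes the hook composition consisting of k parts equal to 1 followed by one part equal to n−k. -/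
open Finset

namespace NCSF

noncomputable section

def comps (n : ℕ) : Finset (List ℕ) :=
  (Finset.univ : Finset (Composition n)).image Composition.blocks

theorem mem_comps {n : ℕ} {L : List ℕ} : L ∈ comps n ↔ (∀ i ∈ L, 0 < i) ∧ L.sum = n := by
  constructor
  · intro h
    obtain ⟨c, -, rfl⟩ := Finset.mem_image.1 h
    exact ⟨fun i hi => c.blocks_pos hi, c.blocks_sum⟩
  · rintro ⟨h1, h2⟩
    exact Finset.mem_image.2 ⟨⟨L, fun {i} hi => h1 i hi, h2⟩, Finset.mem_univ _, rfl⟩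

theorem sum_comps (n : ℕ) (f : List ℕ → Sym) :
    ∑ J : Composition n, f J.blocks = ∑ L ∈ comps n, f L := by
  unfold comps
  rw [Finset.sum_image]
  intro a _ b _ h
  exact Composition.ext h

theorem comps_zero : comps 0 = {[]} := by
  ext L
  rw [mem_comps, Finset.mem_singleton]
  constructor
  · rintro ⟨h1, h2⟩
    cases L with
    | nil => rfl
    | cons a L =>
      have := h1 a (by simp)
      simp at h2
      omega
  · rintro rfl
    simp

theorem comps_rec (n : ℕ) (hn : 1 ≤ n) (f : List ℕ → Sym) :
    ∑ L ∈ comps n, f L = ∑ k ∈ Finset.range n, ∑ L ∈ comps (n - 1 - k), f ((k + 1) :: L) := by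
  rw [Finset.sum_sigma']
  symm
  refine Finset.sum_bij (fun x _ => (x.1 + 1) :: x.2) ?_ ?_ ?_ ?_
  · rintro ⟨k, L⟩ h
    simp only [Finset.mem_sigma, Finset.mem_range, mem_comps] at h
    obtain ⟨h0, h1, h2⟩ := h
    rw [mem_comps]
    refine ⟨?_, ?_⟩
    · intro i hi
      rcases List.mem_cons.1 hi with rfl | hi
      · simp
      · exact h1 i hi
    · simp only [List.sum_cons, h2]
      omega
  · rintro ⟨k, L⟩ _ ⟨k', L'⟩ _ h
    simp at h
    obtain ⟨rfl, rfl⟩ := h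
    rfl
  · intro L h
    rw [mem_comps] at h
    obtain ⟨h1, h2⟩ := h
    cases L with
    | nil => simp at h2; omega
    | cons a L =>
      have ha := h1 a (by simp)
      simp only [List.sum_cons] at h2
      refine ⟨⟨a - 1, L⟩, ?_, ?_⟩
      · simp only [Finset.mem_sigma, Finset.mem_range, mem_comps]
        exact ⟨by omega, fun i hi => h1 i (by simp [hi]), by omega⟩
      · simp only [List.cons.injEq, and_true]
        omega
  · intros; rfl

def g (L : List ℕ) : Sym := (((-1 : ℚ) ^ (L.length + 1)) * (L.getLastD 0 : ℚ)) • SProd L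

theorem g_cons (a : ℕ) (L : List ℕ) :
    g (a :: L) = (if L = [] then (a : ℚ) • S a else 0) - S a * g L := by
  cases L with
  | nil => simp [g, SProd]
  | cons b L =>
    have : (a :: b :: L).getLastD 0 = (b :: L).getLastD 0 := by simp [List.getLastD]
    unfold g
    rw [this]
    simp only [SProd, List.map_cons, List.prod_cons, List.length_cons, reduceCtorEq, if_false,
      zero_sub, mul_smul_comm, ← neg_smul]
    congr 1
    ring

def T (n : ℕ) : Sym := ∑ L ∈ comps n, g L

theorem T_zero : T 0 = 0 := by simp [T, comps_zero, g]

theorem T_rec (m : ℕ) :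
    T (m + 1) = ((m + 1 : ℕ) : ℚ) • S (m + 1) - ∑ k ∈ Finset.range m, S (k + 1) * T (m - k) := by
  have h := comps_rec (m + 1) (by omega) g
  simp only [g_cons, Finset.sum_sub_distrib, ← Finset.mul_sum] at h
  change T (m + 1) = _ - ∑ k ∈ Finset.range (m + 1), S (k + 1) * T (m + 1 - 1 - k) at h
  rw [h, Finset.sum_range_succ (fun k => S (k + 1) * T (m + 1 - 1 - k))]
  simp only [Nat.add_sub_cancel, Nat.sub_self, T_zero, mul_zero, add_zero]
  congr 1
  rw [Finset.sum_range_succ, Finset.sum_eq_zero]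
  · simp [comps_zero]
  · intro k hk
    rw [Finset.mem_range] at hk
    apply Finset.sum_eq_zero
    intro L hL
    rw [if_neg]
    rintro rfl
    rw [mem_comps] at hL
    simp at hL
    omega

theorem psi_eq_T (Ψ : ℕ → Sym)
    (hΨ : ∀ n : ℕ, 1 ≤ n → (n : ℚ) • S n = ∑ k ∈ Finset.range n, S k * Ψ (n - k)) :
    ∀ n, 1 ≤ n → Ψ n = T n := by
  intro n
  induction n using Nat.strong_induction_on with
  | _ n ih =>
    intro hn
    obtain ⟨m, rfl⟩ : ∃ m, n = m + 1 := ⟨n - 1, by omega⟩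
    rw [T_rec, hΨ _ hn, Finset.sum_range_succ']
    have : ∀ k ∈ Finset.range m, S (k + 1) * Ψ (m + 1 - (k + 1)) = S (k + 1) * T (m - k) := by
      intro k hk
      rw [Finset.mem_range] at hk
      rw [ih _ (by omega) (by omega)]
      congr 2
      omega
    rw [Finset.sum_congr rfl this]
    simp [S]

theorem psums_append (L : List ℕ) (m : ℕ) :
    psums (L ++ [m]) = insert (L.sum + m) (psums L) := by
  unfold psums
  rw [List.length_append, List.length_singleton, Finset.range_add_one, Finset.image_insert]
  congr 1
  · rw [List.take_of_length_le (by simp)]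
    simp
  · apply Finset.image_congr
    intro k hk
    have hk : k < L.length := by simpa using hk
    simp only
    rw [List.take_append_of_le_length (by omega)]

theorem psums_ones (k : ℕ) : psums (List.replicate k 1) = Finset.Icc 1 k := by
  induction k with
  | zero => simp [psums]
  | succ k ih =>
    rw [List.replicate_succ', psums_append, ih]
    ext x
    simp
    omega

theorem psums_pos_le (L : List ℕ) (h : ∀ i ∈ L, 0 < i) : psums L ⊆ Finset.Icc 1 L.sum := by
  induction L using List.reverseRecOn with
  | nil => simp [psums]
  | append_singleton L m ih =>
    have hm := h m (by simp)
    have := ih (fun i hi => h i (by simp [hi]))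
    rw [psums_append]
    intro x hx
    rw [Finset.mem_insert] at hx
    rw [Finset.mem_Icc, List.sum_append, List.sum_singleton]
    rcases hx with rfl | hx
    · omega
    · have := Finset.mem_Icc.1 (this hx)
      omega

theorem len_le_sum (L : List ℕ) (h : ∀ i ∈ L, 0 < i) : L.length ≤ L.sum := by
  induction L with
  | nil => simp
  | cons a L ih =>
    have := h a (by simp)
    have := ih (fun i hi => h i (by simp [hi]))
    simp
    omega

theorem subset_iff (J : List ℕ) (m n k : ℕ) (hJ : ∀ i ∈ J, 0 < i) (hm : 0 < m)
    (hs : J.sum + m = n) (hk : k < n) :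
    psums (J ++ [m]) ⊆ psums (List.replicate k 1 ++ [n - k]) ↔ J.sum ≤ k := by
  have e : (List.replicate k 1).sum + (n - k) = n := by simp; omega
  rw [psums_append, psums_append, psums_ones, e, hs]
  constructor
  · intro h
    rcases List.eq_nil_or_concat' J with rfl | ⟨J', a, rfl⟩
    · simp
    · have h1 := h (Finset.mem_insert_of_mem (a := (J' ++ [a]).sum) (by
        rw [psums_append]; simp))
      rw [Finset.mem_insert, Finset.mem_Icc] at h1
      omega
  · intro h
    apply Finset.insert_subset_insert
    refine (psums_pos_le J hJ).trans ?_
    exact Finset.Icc_subset_Icc le_rfl h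

theorem ribbon_eq (n k : ℕ) (hk : k < n) :
    Ribbon (List.replicate k 1 ++ [n - k]) = ∑ J ∈ comps n,
      if psums J ⊆ psums (List.replicate k 1 ++ [n - k]) then
        ((-1 : ℚ) ^ (k + 1 - J.length)) • SProd J else 0 := by
  have e : (List.replicate k 1 ++ [n - k]).sum = n := by simp; omega
  have h := sum_comps (List.replicate k 1 ++ [n - k]).sum (fun J =>
      if psums J ⊆ psums (List.replicate k 1 ++ [n - k]) then
        ((-1 : ℚ) ^ (k + 1 - J.length)) • SProd J else 0)
  rw [e] at h
  rw [← h]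
  unfold Ribbon
  simp only [List.length_append, List.length_replicate, List.length_singleton]
  rw [e]

theorem hooks_eq_T (n : ℕ) (hn : 1 ≤ n) :
    ∑ k ∈ Finset.range n, ((-1 : ℚ) ^ k) • Ribbon (List.replicate k 1 ++ [n - k]) = T n := by
  have h1 : ∀ k ∈ Finset.range n,
      ((-1 : ℚ) ^ k) • Ribbon (List.replicate k 1 ++ [n - k]) = ∑ J ∈ comps n,
      if psums J ⊆ psums (List.replicate k 1 ++ [n - k]) then
        ((-1 : ℚ) ^ k * (-1 : ℚ) ^ (k + 1 - J.length)) • SProd J else 0 := by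
    intro k hk
    rw [ribbon_eq n k (Finset.mem_range.1 hk), Finset.smul_sum]
    apply Finset.sum_congr rfl
    intro J _
    split_ifs
    · rw [smul_smul]
    · rw [smul_zero]
  rw [Finset.sum_congr rfl h1, Finset.sum_comm]
  unfold T
  apply Finset.sum_congr rfl
  intro L hL
  rw [mem_comps] at hL
  obtain ⟨hp, hs⟩ := hL
  rcases List.eq_nil_or_concat' L with rfl | ⟨J, m, rfl⟩
  · simp at hs; omega
  have hm := hp m (by simp)
  have hJ : ∀ i ∈ J, 0 < i := fun i hi => hp i (by simp [hi])
  rw [List.sum_append, List.sum_singleton] at hs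
  have h2 : ∀ k ∈ Finset.range n,
      (if psums (J ++ [m]) ⊆ psums (List.replicate k 1 ++ [n - k]) then
        ((-1 : ℚ) ^ k * (-1 : ℚ) ^ (k + 1 - (J ++ [m]).length)) • SProd (J ++ [m]) else 0)
      = if J.sum ≤ k then ((-1 : ℚ) ^ J.length) • SProd (J ++ [m]) else 0 := by
    intro k hk
    simp only [subset_iff J m n k hJ hm hs (Finset.mem_range.1 hk)]
    split_ifs with h
    · congr 1
      have := len_le_sum J hJ
      obtain ⟨d, rfl⟩ : ∃ d, k = J.length + d := ⟨k - J.length, by omega⟩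
      have e : J.length + d + 1 - (J ++ [m]).length = d := by rw [List.length_append, List.length_singleton]; omega
      rw [e, pow_add, mul_assoc, ← mul_pow]
      simp
    · rfl
  rw [Finset.sum_congr rfl h2, ← Finset.sum_filter, Finset.sum_const]
  have e : (Finset.range n).filter (fun k => J.sum ≤ k) = Finset.Ico J.sum n := by
    ext x
    simp
    omega
  have e2 : n - J.sum = m := by omega
  rw [e, Nat.card_Ico, e2, g, ← Nat.cast_smul_eq_nsmul ℚ, smul_smul]
  congr 1
  simp [pow_succ]
  ring

/-- **Power sums as alternating sums of hook ribbon functions**: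
if `Ψ` satisfies the defining recursion `n·S_n = ∑_{k=0}^{n−1} S_k Ψ_{n−k}` of the
noncommutative power sums of the first kind, then for every `n ≥ 1`,
`Ψ_n = ∑_{k=0}^{n−1} (−1)^k R_{(1^k, n−k)}`. -/
theorem psi_eq_alternating_hooks
    (Ψ : ℕ → Sym)
    (hΨ : ∀ n : ℕ, 1 ≤ n → (n : ℚ) • S n = ∑ k ∈ Finset.range n, S k * Ψ (n - k)) :
    ∀ n, 1 ≤ n →
      Ψ n = ∑ k ∈ Finset.range n,
        ((-1 : ℚ) ^ k) • Ribbon (List.replicate k 1 ++ [n - k]) := by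
  intro n hn
  rw [hooks_eq_T n hn]
  exact psi_eq_T Ψ hΨ n hn

end

end NCSF
end

section
/- In Sym, for every n ≥ 1, Φ_n = Σ_{|I|=n} ((−1)^{ℓ(I)−1} / C(n−1, ℓ(I)−1)) R_I, where the sum is over all compositions I of n and C(a,b) denotes the binomial coefficient. -/
open Finset

namespace NCSF

noncomputable section

/-- The noncommutative power sums of the second kind
`Φ_n = ∑_{|J|=n} (−1)^{ℓ(J)−1} (n/ℓ(J)) S^J`. -/
def Phi (n : ℕ) : Sym :=
  ∑ J : Composition n,
    ((-1 : ℚ) ^ (J.length - 1) * (n : ℚ) / (J.length : ℚ)) • SProd J.blocks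

/-- lemma A -/
theorem Ribbon_eq (L : List ℕ) (n : ℕ) (h : L.sum = n) :
    Ribbon L = ∑ J : Composition n,
      if psums J.blocks ⊆ psums L then ((-1 : ℚ) ^ (L.length - J.length)) • SProd J.blocks
      else 0 := by
  subst h; rfl

theorem choose_ident (m b : ℕ) :
    ∑ i ∈ range (m + 1), (m.choose i : ℚ) * (1 / ((m + b).choose (i + b) : ℚ))
      = ((m + b + 1 : ℕ) : ℚ) / ((b + 1 : ℕ) : ℚ) := by
  have h1 : ∀ i ∈ range (m + 1), (m.choose i : ℚ) * (1 / ((m + b).choose (i + b) : ℚ))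
      = ((i + b).choose b : ℚ) / ((m + b).choose b : ℚ) := by
    intro i hi
    have hi' : i ≤ m := by simpa [Nat.lt_succ_iff] using hi
    have h := Nat.choose_mul (n := m + b) (k := i + b) (s := b) (by omega)
    simp only [Nat.add_sub_cancel] at h
    have e1 : ((m + b).choose (i + b) : ℚ) ≠ 0 :=
      Nat.cast_ne_zero.mpr (Nat.choose_pos (by omega)).ne'
    have e2 : ((m + b).choose b : ℚ) ≠ 0 :=
      Nat.cast_ne_zero.mpr (Nat.choose_pos (by omega)).ne'
    have h' : ((m + b).choose (i + b) : ℚ) * ((i + b).choose b : ℚ)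
      = ((m + b).choose b : ℚ) * (m.choose i : ℚ) := by exact_mod_cast h
    field_simp
    linarith
  rw [sum_congr rfl h1, ← sum_div]
  have h2 : ∑ i ∈ range (m + 1), ((i + b).choose b : ℚ) = ((m + b + 1).choose (b + 1) : ℚ) := by
    exact_mod_cast Nat.sum_range_add_choose m b
  have h3 : ((m + b + 1 : ℕ) : ℚ) * ((m + b).choose b : ℚ)
      = ((m + b + 1).choose (b + 1) : ℚ) * ((b + 1 : ℕ) : ℚ) := by
    exact_mod_cast Nat.add_one_mul_choose_eq (m + b) b
  have e2 : ((m + b).choose b : ℚ) ≠ 0 :=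
    Nat.cast_ne_zero.mpr (Nat.choose_pos (by omega)).ne'
  have e3 : ((b + 1 : ℕ) : ℚ) ≠ 0 := Nat.cast_ne_zero.mpr (by omega)
  rw [h2, div_eq_div_iff e2 e3, h3]

theorem sum_Icc_sets (n : ℕ) (U B : Finset ℕ) (hU : U.card = n) (hB : B ⊆ U) (hB0 : 0 < B.card) :
    ∑ A ∈ Finset.Icc B U, (1 / ((n - 1).choose (A.card - 1) : ℚ)) = (n : ℚ) / (B.card : ℚ) := by
  rw [Finset.Icc_eq_image_powerset hB, sum_image]
  · have h1 : ∀ C ∈ (U \ B).powerset, (1 / ((n - 1).choose ((B ∪ C).card - 1) : ℚ))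
        = (fun k => 1 / ((n - 1).choose (B.card + k - 1) : ℚ)) C.card := by
      intro C hC
      rw [card_union_of_disjoint]
      exact disjoint_of_subset_right (mem_powerset.mp hC) disjoint_sdiff
    rw [sum_congr rfl h1, sum_powerset_apply_card (fun k => 1 / ((n - 1).choose (B.card + k - 1) : ℚ))]
    have hc : (U \ B).card = n - B.card := by rw [card_sdiff_of_subset hB, hU]
    have hle : B.card ≤ n := hU ▸ card_le_card hB
    obtain ⟨b, hb⟩ : ∃ b, B.card = b + 1 := ⟨B.card - 1, by omega⟩
    obtain ⟨m, rfl⟩ : ∃ m, n = m + b + 1 := ⟨n - (b + 1), by omega⟩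
    have := choose_ident m b
    rw [hc, hb]
    have e : m + b + 1 - (b + 1) = m := by omega
    rw [e, ← this]
    refine sum_congr rfl fun i _ => ?_
    have e' : b + 1 + i - 1 = i + b := by omega
    rw [nsmul_eq_mul, e', Nat.add_sub_cancel]
  · intro C hC D hD h
    have hC' := disjoint_of_subset_right (mem_powerset.mp hC) (disjoint_sdiff (s := B))
    have hD' := disjoint_of_subset_right (mem_powerset.mp hD) (disjoint_sdiff (s := B))
    dsimp at h
    rw [← union_sdiff_cancel_left hC', h, union_sdiff_cancel_left hD']

theorem psums_mem {n : ℕ} (c : Composition n) (x : ℕ) :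
    x ∈ psums c.blocks ↔ ∃ k < c.length, c.sizeUpTo (k + 1) = x := by
  simp [psums, Composition.sizeUpTo]

theorem psums_card {n : ℕ} (c : Composition n) : (psums c.blocks).card = c.length := by
  unfold psums
  rw [card_image_of_injOn, card_range, c.blocks_length]
  intro a ha b hb h
  simp only [coe_range, Set.mem_Iio, c.blocks_length] at ha hb
  have h : c.sizeUpTo (a + 1) = c.sizeUpTo (b + 1) := h
  have h' : c.boundary ⟨a + 1, by omega⟩ = c.boundary ⟨b + 1, by omega⟩ := Fin.ext h
  simpa using c.boundary.injective h'

theorem psums_eq {n : ℕ} (c : Composition n) (x : Fin (n + 1)) :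
    x ∈ c.boundaries ↔ x = 0 ∨ x.val ∈ psums c.blocks := by
  rw [psums_mem]
  simp only [Composition.boundaries, mem_map, mem_univ, true_and, Composition.boundary]
  constructor
  · rintro ⟨k, hk⟩
    have hk' : c.sizeUpTo k = x.val := congrArg Fin.val hk
    rcases k with ⟨k, hkl⟩
    cases k with
    | zero => left; ext; simpa using hk'.symm
    | succ k => right; exact ⟨k, by omega, hk'⟩
  · rintro (h | ⟨k, hk, h⟩)
    · exact ⟨0, by subst h; ext; simp⟩
    · exact ⟨⟨k + 1, by omega⟩, by ext; simpa using h⟩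

theorem psums_sub {n : ℕ} (c : Composition n) : psums c.blocks ⊆ Finset.Icc 1 n := by
  intro x hx
  obtain ⟨k, hk, rfl⟩ := (psums_mem c x).1 hx
  have := c.sizeUpTo_strict_mono hk
  have := c.sizeUpTo_le (k + 1)
  rw [Finset.mem_Icc]; omega

theorem psums_inj {n : ℕ} : Function.Injective (fun c : Composition n => psums c.blocks) := by
  intro c d h
  have h : psums c.blocks = psums d.blocks := h
  apply (compositionEquiv n).injective
  ext x
  change x ∈ c.boundaries ↔ x ∈ d.boundaries
  rw [psums_eq, psums_eq, h]

theorem n_mem {n : ℕ} (hn : 1 ≤ n) (c : Composition n) : n ∈ psums c.blocks := by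
  have h := (psums_eq c (Fin.last n)).1 c.toCompositionAsSet.getLast_mem
  rcases h with h | h
  · have := congrArg Fin.val h
    simp at this; omega
  · exact h

theorem psums_surj {n : ℕ} (A : Finset ℕ) (hA : A ⊆ Finset.Icc 1 n) (hnA : n ∈ A) :
    ∃ c : Composition n, psums c.blocks = A := by
  let s : CompositionAsSet n :=
    { boundaries := univ.filter fun x => x = 0 ∨ x.val ∈ A
      zero_mem := by simp
      getLast_mem := by simp [hnA] }
  refine ⟨s.toComposition, ?_⟩
  have hs : ∀ x : Fin (n + 1), x ∈ s.toComposition.boundaries ↔ x = 0 ∨ x.val ∈ A := by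
    intro x
    rw [s.toComposition_boundaries]
    simp [s]
  ext x
  constructor
  · intro hx
    have hx' := Finset.mem_Icc.1 (psums_sub _ hx)
    have := (hs ⟨x, by omega⟩).1 ((psums_eq _ _).2 (Or.inr hx))
    rcases this with h | h
    · have := congrArg Fin.val h
      simp at this; omega
    · exact h
  · intro hx
    have hx' := Finset.mem_Icc.1 (hA hx)
    have := (psums_eq _ _).1 ((hs ⟨x, by omega⟩).2 (Or.inr hx))
    rcases this with h | h
    · have := congrArg Fin.val h
      simp at this; omega
    · exact h

theorem sum_finer {n : ℕ} (hn : 1 ≤ n) (J : Composition n) :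
    ∑ I : Composition n with psums J.blocks ⊆ psums I.blocks,
      (1 / ((n - 1).choose (I.length - 1) : ℚ)) = (n : ℚ) / (J.length : ℚ) := by
  rw [← psums_card J, ← sum_Icc_sets n (Finset.Icc 1 n) (psums J.blocks) (by simp) (psums_sub J)
    (card_pos.2 ⟨n, n_mem hn J⟩)]
  refine sum_bij (fun I _ => psums I.blocks) ?_ ?_ ?_ ?_
  · intro I hI
    rw [Finset.mem_Icc]
    exact ⟨(mem_filter.1 hI).2, psums_sub I⟩
  · intro I _ K _ h
    exact psums_inj h
  · intro A hA
    rw [Finset.mem_Icc] at hA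
    obtain ⟨c, hc⟩ := psums_surj A hA.2 (hA.1 (n_mem hn J))
    exact ⟨c, by simp [hc]; exact hA.1, hc⟩
  · intro I _
    rw [psums_card]

/-- **Expansion of `Φ_n` in the ribbon basis**: for every `n ≥ 1`,
`Φ_n = ∑_{|I|=n} ((−1)^{ℓ(I)−1} / C(n−1, ℓ(I)−1)) R_I`. -/
theorem phi_in_ribbon_basis :
    ∀ n : ℕ, 1 ≤ n →
      Phi n = ∑ I : Composition n,
        ((-1 : ℚ) ^ (I.length - 1) / (Nat.choose (n - 1) (I.length - 1) : ℚ)) •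
          Ribbon I.blocks := by
  intro n hn
  have h1 : ∀ I : Composition n, Ribbon I.blocks = ∑ J : Composition n,
      if psums J.blocks ⊆ psums I.blocks then
        ((-1 : ℚ) ^ (I.blocks.length - J.length)) • SProd J.blocks
      else 0 := fun I => Ribbon_eq I.blocks n I.blocks_sum
  simp only [h1, smul_sum]
  rw [sum_comm]
  unfold Phi
  refine sum_congr rfl fun J _ => ?_
  rw [mul_div_assoc, ← sum_finer hn J, mul_sum, sum_smul, sum_filter]
  refine sum_congr rfl fun I _ => ?_
  split_ifs with h
  · rw [smul_smul]
    congr 1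
    have hle : J.length ≤ I.length := by
      rw [← psums_card, ← psums_card]; exact card_le_card h
    have hJ : 0 < J.length := J.length_pos_iff.2 hn
    obtain ⟨d, hd⟩ := Nat.exists_eq_add_of_le hle
    obtain ⟨b, hb⟩ : ∃ b, J.length = b + 1 := ⟨J.length - 1, by omega⟩
    have e1 : I.length - 1 = b + d := by omega
    have e2 : I.length - J.length = d := by omega
    have e3 : J.length - 1 = b := by omega
    rw [I.blocks_length, e1, e2, e3, pow_add]
    have : (-1 : ℚ) ^ d * (-1) ^ d = 1 := by rw [← mul_pow]; simp
    linear_combination (-(-1 : ℚ) ^ b / ((n - 1).choose (b + d) : ℚ)) * this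
  · rw [smul_zero]

end

end NCSF
end

section
/- In Sym, for every n ≥ 1, Ψ_n = Σ_{|K|=n} c_K · Φ^K / (ℓ(K)!·π(K)), where the sum is over all compositions K = (k₁,…,k_r) of n, π(K) := k₁k₂⋯k_r, and c_K := Σ_{i=1}^{r} (−1)^{i−1} C(r−1, i−1) k_i with C(a,b) the binomial coefficient. (This is the expansion of the first-kind power sums in the basis of products of second-kind power sums.) -/
open Finset

namespace NCSF

noncomputable section

/-- `Φ^K = Φ_{k₁} ⋯ Φ_{k_r}`. -/
def PhiProd (L : List ℕ) : Sym := (L.map Phi).prod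

/-- `c_K = ∑_{i=1}^{r} (−1)^{i−1} C(r−1, i−1) k_i` for a composition `K = (k₁,…,k_r)`. -/
def cCoeff (K : List ℕ) : ℚ :=
  ∑ i ∈ Finset.range K.length,
    (-1 : ℚ) ^ i * (Nat.choose (K.length - 1) i : ℚ) * (K.getD i 0 : ℚ)

section aux
open PowerSeries
variable {A : Type*} [Ring A] [Algebra ℚ A]

lemma tri_box {M : Type*} [AddCommMonoid M] (N : ℕ) (f : ℕ → ℕ → M)
    (h : ∀ a b, N ≤ a + b → f a b = 0) :
    ∑ r ∈ range N, ∑ p ∈ antidiagonal r, f p.1 p.2 = ∑ a ∈ range N, ∑ b ∈ range N, f a b := by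
  rw [← Finset.sum_product' (f := f)]
  rw [← Finset.sum_filter_of_ne (p := fun x : ℕ × ℕ => x.1 + x.2 < N)]
  · rw [Finset.sum_sigma']
    refine Finset.sum_bij' (fun x _ => x.2) (fun x _ => ⟨x.1 + x.2, x⟩) ?_ ?_ ?_ ?_ ?_
    · rintro ⟨r, a, b⟩ hx
      simp at hx ⊢; omega
    · rintro ⟨a, b⟩ hx
      simp at hx ⊢; omega
    · rintro ⟨r, a, b⟩ hx
      simp at hx ⊢; omega
    · rintro ⟨a, b⟩ hx
      simp
    · rintro ⟨r, a, b⟩ hx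
      simp
  · rintro ⟨a, b⟩ _ hx
    by_contra hc
    exact hx (h a b (by simpa using hc))

lemma coeff_pow_zero' {B : Type*} [Semiring B] (u : B⟦X⟧) (hu : constantCoeff u = 0) {n r : ℕ}
    (h : n < r) : coeff n (u ^ r) = 0 := by
  apply coeff_of_lt_order
  refine lt_of_lt_of_le ?_ (le_order_pow_of_constantCoeff_eq_zero r hu)
  exact_mod_cast h

def ev (f : ℚ⟦X⟧) (u : A⟦X⟧) : A⟦X⟧ :=
  PowerSeries.mk fun n => ∑ r ∈ range (n + 1), coeff r f • coeff n (u ^ r)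

lemma coeff_ev (f : ℚ⟦X⟧) (u : A⟦X⟧) (hu : constantCoeff u = 0) (n N : ℕ) (h : n < N) :
    coeff n (ev f u) = ∑ r ∈ range N, coeff r f • coeff n (u ^ r) := by
  rw [ev, coeff_mk]
  apply Finset.sum_subset
  · intro x; simp; omega
  · intro x _ hx
    rw [coeff_pow_zero' u hu (by simpa using hx), smul_zero]

lemma ev_mul (f g : ℚ⟦X⟧) (u : A⟦X⟧) (hu : constantCoeff u = 0) :
    ev f u * ev g u = ev (f * g) u := by
  ext n
  rw [coeff_ev _ u hu n (n+1) (by omega), coeff_mul]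
  have h1 : ∀ p ∈ antidiagonal n, coeff p.1 (ev f u) * coeff p.2 (ev g u) =
      ∑ i ∈ range (n+1), ∑ j ∈ range (n+1),
        (coeff i f * coeff j g) • (coeff p.1 (u ^ i) * coeff p.2 (u ^ j)) := by
    intro p hp
    rw [HasAntidiagonal.mem_antidiagonal] at hp
    rw [coeff_ev _ u hu _ (n+1) (by omega), coeff_ev _ u hu _ (n+1) (by omega),
      Finset.sum_mul_sum]
    simp_rw [smul_mul_smul_comm]
  rw [Finset.sum_congr rfl h1, Finset.sum_comm]
  simp_rw [Finset.sum_comm (s := antidiagonal n), ← Finset.smul_sum, ← coeff_mul, ← pow_add]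
  rw [← tri_box]
  · refine Finset.sum_congr rfl fun r _ => ?_
    rw [coeff_mul, Finset.sum_smul]
    refine Finset.sum_congr rfl fun p hp => ?_
    rw [HasAntidiagonal.mem_antidiagonal] at hp
    rw [hp]
  · intro a b h
    rw [coeff_pow_zero' u hu (by omega), smul_zero]

lemma ev_one (u : A⟦X⟧) : ev 1 u = 1 := by
  ext n
  rw [ev, coeff_mk, Finset.sum_eq_single 0]
  · simp
  · intro b _ hb
    simp [PowerSeries.coeff_one, hb]
  · simp

lemma ev_pow (f : ℚ⟦X⟧) (u : A⟦X⟧) (hu : constantCoeff u = 0) (r : ℕ) :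
    (ev f u) ^ r = ev (f ^ r) u := by
  induction r with
  | zero => simp [ev_one]
  | succ r ih => rw [pow_succ, pow_succ, ih, ev_mul _ _ _ hu]

lemma ev_const (f : ℚ⟦X⟧) (u : A⟦X⟧) (hf : constantCoeff f = 0) :
    constantCoeff (ev f u) = 0 := by
  rw [← coeff_zero_eq_constantCoeff_apply, ev, coeff_mk]
  simp [hf]

lemma ev_ev (f l : ℚ⟦X⟧) (u : A⟦X⟧) (hu : constantCoeff u = 0) (hl : constantCoeff l = 0) :
    ev f (ev l u) = ev (ev f l) u := by
  ext n
  rw [coeff_ev _ _ (ev_const l u hl) n (n+1) (by omega), coeff_ev _ _ hu n (n+1) (by omega)]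
  have : ∀ m ∈ range (n+1), coeff m (ev f l) • coeff n (u ^ m) =
      ∑ r ∈ range (n+1), coeff r f • coeff m (l ^ r) • coeff n (u ^ m) := by
    intro m hm
    rw [coeff_ev f l hl m (n+1) (by simpa using hm), Finset.sum_smul]
    simp [mul_smul]
  rw [Finset.sum_congr rfl this, Finset.sum_comm]
  refine Finset.sum_congr rfl fun r _ => ?_
  rw [ev_pow _ _ hu, coeff_ev _ _ hu n (n+1) (by omega), Finset.smul_sum]

def ex : ℚ⟦X⟧ := PowerSeries.mk fun n => 1 / (n.factorial : ℚ)
def lg : ℚ⟦X⟧ := PowerSeries.mk fun n => (-1) ^ (n - 1) / (n : ℚ)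

lemma lg_const : constantCoeff lg = 0 := by
  rw [← coeff_zero_eq_constantCoeff_apply, lg, coeff_mk]; simp

lemma lg_der : (1 + X) * d⁄dX ℚ lg = 1 := by
  ext n
  rw [add_mul, one_mul, map_add]
  cases n with
  | zero => simp [coeff_derivative, lg]
  | succ n =>
    rw [coeff_succ_X_mul, coeff_derivative, coeff_derivative, lg, coeff_mk, coeff_mk]
    simp only [Nat.add_sub_cancel, PowerSeries.coeff_one]
    push_cast
    have h1 : (n:ℚ) + 1 ≠ 0 := by positivity
    have h2 : (n:ℚ) + 1 + 1 ≠ 0 := by positivity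
    field_simp
    simp [pow_succ]

lemma ex_lg : ev ex lg = 1 + X := by
  have hD : (1 + X) * d⁄dX ℚ (ev ex lg) = ev ex lg := by
    ext n
    have key : ∀ k ≤ n, coeff k (d⁄dX ℚ (ev ex lg)) =
        coeff k (∑ r ∈ range (n+1), (1 / (r.factorial : ℚ)) • (lg ^ r * d⁄dX ℚ lg)) := by
      intro k hk
      rw [coeff_derivative, coeff_ev _ _ lg_const (k+1) (n+2) (by omega), Finset.sum_range_succ',
        add_mul, Finset.sum_mul, map_sum]
      simp only [pow_zero, PowerSeries.coeff_one]
      rw [if_neg (by omega), smul_zero, zero_mul, add_zero]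
      refine Finset.sum_congr rfl fun r _ => ?_
      rw [smul_mul_assoc, ← coeff_derivative, derivative_pow, ex, coeff_mk, PowerSeries.coeff_smul]
      have : (((r + 1 : ℕ) : ℚ⟦X⟧) * lg ^ (r + 1 - 1) * d⁄dX ℚ lg) =
        ((r:ℚ) + 1) • (lg ^ r * d⁄dX ℚ lg) := by
        rw [Nat.add_sub_cancel, mul_assoc, ← nsmul_eq_mul, ← Nat.cast_smul_eq_nsmul ℚ]; push_cast; rfl
      rw [this, PowerSeries.coeff_smul, smul_smul, Nat.factorial_succ]
      congr 1
      have h1 : (n:ℚ) + 1 ≠ 0 := by positivity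
      have := Nat.factorial_ne_zero r
      push_cast
      field_simp
    have : coeff n ((1 + X) * d⁄dX ℚ (ev ex lg)) = coeff n ((1 + X) *
       (∑ r ∈ range (n+1), (1 / (r.factorial : ℚ)) • (lg ^ r * d⁄dX ℚ lg))) := by
      rw [coeff_mul, coeff_mul]
      refine Finset.sum_congr rfl fun p hp => ?_
      rw [HasAntidiagonal.mem_antidiagonal] at hp
      rw [key _ (by omega)]
    rw [this, Finset.mul_sum, map_sum, coeff_ev _ _ lg_const n (n+1) (by omega)]
    refine Finset.sum_congr rfl fun r _ => ?_
    rw [mul_smul_comm, mul_left_comm, lg_der, mul_one, ex, coeff_mk, PowerSeries.coeff_smul]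
  have hc : ∀ n, coeff (n+1) (ev ex lg) * (n+1) + coeff n (ev ex lg) * n = coeff n (ev ex lg) := by
    intro n
    conv_rhs => rw [← hD]
    rw [add_mul, one_mul, map_add, coeff_derivative]
    congr 1
    cases n with
    | zero => simp
    | succ n => rw [coeff_succ_X_mul, coeff_derivative]; push_cast; rfl
  have h0 : coeff 0 (ev ex lg) = 1 := by simp [ev, ex]
  have h1 : coeff 1 (ev ex lg) = 1 := by
    have := hc 0
    rw [h0] at this; simpa using this
  have h2 : ∀ n, coeff (n+2) (ev ex lg) = 0 := by
    intro n
    induction n with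
    | zero =>
      have := hc 1
      rw [h1] at this; norm_num at this; simpa using this
    | succ n ih =>
      have := hc (n+2)
      rw [ih] at this
      push_cast at this
      simp at this
      rcases this with h | h
      · exact h
      · exfalso; have : (n:ℚ) + 2 + 1 > 0 := by positivity
        linarith
  ext n
  match n with
  | 0 => rw [h0]; simp
  | 1 => rw [h1]; simp [PowerSeries.coeff_one]
  | n+2 => rw [h2]; simp [PowerSeries.coeff_one, PowerSeries.coeff_X]

lemma ev_one_add_X (u : A⟦X⟧) (hu : constantCoeff u = 0) : ev (1 + X) u = 1 + u := by
  ext n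
  rw [coeff_ev _ _ hu n (n+2) (by omega), Finset.sum_range_succ', Finset.sum_range_succ']
  simp [PowerSeries.coeff_one, PowerSeries.coeff_X, add_comm]

lemma exp_log (u : A⟦X⟧) (hu : constantCoeff u = 0) : ev ex (ev lg u) = 1 + u := by
  rw [ev_ev _ _ _ hu lg_const, ex_lg, ev_one_add_X _ hu]

def cb (b : ℕ) : ℚ⟦X⟧ :=
  PowerSeries.mk fun i => (-1) ^ i * ((i + b).choose i : ℚ) / ((i + b + 1).factorial : ℚ)
def db (b : ℕ) : ℚ⟦X⟧ := PowerSeries.mk fun a => 1 / ((a + b + 1).factorial : ℚ)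

lemma beta (a : ℕ) : ∀ b : ℕ, ∑ i ∈ range (a+1), (-1:ℚ) ^ i * (a.choose i : ℚ) / ((i:ℚ) + b + 1) =
    (a.factorial : ℚ) * b.factorial / ((a + b + 1).factorial : ℚ) := by
  induction a with
  | zero => 
    intro b
    have := Nat.factorial_ne_zero b
    simp [Nat.factorial_succ]; field_simp
  | succ a ih =>
    intro b
    have e : ∑ i ∈ range (a+1+1), (-1:ℚ) ^ i * ((a+1).choose i : ℚ) / ((i:ℚ) + b + 1) = 
      ∑ i ∈ range (a+1), (-1:ℚ) ^ i * (a.choose i : ℚ) / ((i:ℚ) + b + 1) -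
      ∑ i ∈ range (a+1), (-1:ℚ) ^ i * (a.choose i : ℚ) / ((i:ℚ) + (b + 1 : ℕ) + 1) := by
      rw [Finset.sum_range_succ']
      have h2 : ∑ i ∈ range (a+1), (-1:ℚ) ^ i * (a.choose i : ℚ) / ((i:ℚ) + b + 1) = 
        ∑ i ∈ range (a+1+1), (-1:ℚ) ^ i * (a.choose i : ℚ) / ((i:ℚ) + b + 1) := by
        rw [Finset.sum_range_succ _ (a+1)]; simp
      rw [h2, Finset.sum_range_succ' _ (a+1), add_sub_right_comm, ← Finset.sum_sub_distrib]
      simp only [Nat.choose_zero_right]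
      congr 1
      refine Finset.sum_congr rfl fun i _ => ?_
      rw [Nat.choose_succ_succ]
      push_cast
      rw [pow_succ]
      ring
    rw [e, ih, ih]
    have := Nat.factorial_ne_zero b
    have := Nat.factorial_ne_zero a
    have := Nat.factorial_ne_zero (a+b+1)
    rw [show a + 1 + b + 1 = (a + b + 1) + 1 by ring, show a + (b + 1) + 1 = (a + b + 1) + 1 by ring,
      Nat.factorial_succ (a+b+1), Nat.factorial_succ a, Nat.factorial_succ b]
    push_cast
    have h1 : (a:ℚ) + b + 1 + 1 ≠ 0 := by positivity
    field_simp
    ring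

lemma ex_cb (b : ℕ) : ex * cb b = db b := by
  ext a
  rw [mul_comm, coeff_mul, Finset.Nat.sum_antidiagonal_eq_sum_range_succ_mk]
  have := beta a b
  simp only [ex, cb, db, coeff_mk]
  have ha := Nat.factorial_ne_zero a
  have hb := Nat.factorial_ne_zero b
  have key : (1 : ℚ) / ((a+b+1).factorial) = (1 / ((a.factorial:ℚ) * b.factorial)) *
    ((a.factorial : ℚ) * b.factorial / ((a + b + 1).factorial : ℚ)) := by
    field_simp
  rw [key, ← this, Finset.mul_sum]
  refine Finset.sum_congr rfl fun i hi => ?_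
  have hi' : i ≤ a := by simp at hi; omega
  rw [Nat.cast_choose ℚ hi', Nat.cast_choose ℚ (show i ≤ i + b by omega), Nat.add_sub_cancel_left,
    Nat.factorial_succ]
  have h1 := Nat.factorial_ne_zero i
  have h2 := Nat.factorial_ne_zero (a-i)
  have h3 := Nat.factorial_ne_zero (i+b)
  have h4 : (i:ℚ) + b + 1 ≠ 0 := by positivity
  push_cast
  field_simp

/-- the derivation `t d/dt` -/
def D (f : A⟦X⟧) : A⟦X⟧ := PowerSeries.mk fun n => (n : ℚ) • coeff n f

lemma D_mul (f g : A⟦X⟧) : D (f * g) = D f * g + f * D g := by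
  ext n
  rw [D, coeff_mk, map_add, coeff_mul, coeff_mul, coeff_mul, ← Finset.sum_add_distrib,
    Finset.smul_sum]
  refine Finset.sum_congr rfl fun p hp => ?_
  rw [HasAntidiagonal.mem_antidiagonal] at hp
  rw [D, D, coeff_mk, coeff_mk, ← hp, smul_mul_assoc, mul_smul_comm, ← add_smul]
  push_cast; rfl

lemma D_one : D (1 : A⟦X⟧) = 0 := by
  ext n
  rw [D, coeff_mk, PowerSeries.coeff_one]
  split_ifs with h <;> simp [h]

lemma D_pow (F : A⟦X⟧) (r : ℕ) :
    D (F ^ (r+1)) = ∑ p ∈ antidiagonal r, F ^ p.1 * D F * F ^ p.2 := by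
  induction r with
  | zero => simp
  | succ r ih =>
    rw [pow_succ', D_mul, ih, Finset.Nat.antidiagonal_succ, Finset.sum_cons, Finset.sum_map,
      Finset.mul_sum]
    simp [pow_succ', mul_assoc]

lemma FGF_zero (F : A⟦X⟧) (hF : constantCoeff F = 0) (a b n : ℕ) (h : n ≤ a + b) :
    coeff n (F ^ a * D F * F ^ b) = 0 := by
  apply coeff_of_lt_order
  have h1 := le_order_pow_of_constantCoeff_eq_zero a hF
  have h2 := le_order_pow_of_constantCoeff_eq_zero b hF
  have h3 : 1 ≤ (D F).order := by
    rw [one_le_order_iff_constCoeff_eq_zero, ← coeff_zero_eq_constantCoeff_apply, D, coeff_mk]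
    simp
  have h4 := le_order_mul (F ^ a) (D F)
  have h5 := le_order_mul (F ^ a * D F) (F ^ b)
  refine lt_of_lt_of_le ?_ h5
  refine lt_of_lt_of_le ?_ (add_le_add (le_trans (add_le_add h1 h3) h4) h2)
  have : n < a + 1 + b := by omega
  exact_mod_cast this

lemma sum_ev_G (F : A⟦X⟧) (hF : constantCoeff F = 0) (f : ℚ⟦X⟧) (G H : A⟦X⟧) (n N : ℕ)
    (h : n < N) : coeff n (ev f F * G * H) =
      ∑ a ∈ range N, coeff a f • coeff n (F ^ a * G * H) := by
  have : coeff n (ev f F * (G * H)) =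
      coeff n ((∑ a ∈ range N, coeff a f • F ^ a) * (G * H)) := by
    rw [coeff_mul, coeff_mul]
    refine Finset.sum_congr rfl fun p hp => ?_
    rw [HasAntidiagonal.mem_antidiagonal] at hp
    rw [coeff_ev _ _ hF _ N (by omega), map_sum]
    simp_rw [PowerSeries.coeff_smul]
  rw [mul_assoc, this, Finset.sum_mul, map_sum]
  simp_rw [smul_mul_assoc, PowerSeries.coeff_smul, mul_assoc]

/-- the series of the right-hand sides -/
def PP (F : A⟦X⟧) : A⟦X⟧ := PowerSeries.mk fun n =>
  ∑ r ∈ range n, ∑ p ∈ antidiagonal r,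
    ((-1) ^ p.1 * ((p.1 + p.2).choose p.1 : ℚ) / ((p.1 + p.2 + 1).factorial : ℚ)) •
      coeff n (F ^ p.1 * D F * F ^ p.2)

lemma coeff_tri (F : A⟦X⟧) (hF : constantCoeff F = 0) (f : ℕ → ℚ⟦X⟧) (n N : ℕ) (h : n < N) :
    ∑ r ∈ range n, ∑ p ∈ antidiagonal r, coeff p.1 (f p.2) • coeff n (F ^ p.1 * D F * F ^ p.2)
    = coeff n (∑ b ∈ range N, ev (f b) F * D F * F ^ b) := by
  have e : ∑ r ∈ range n, ∑ p ∈ antidiagonal r,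
        coeff p.1 (f p.2) • coeff n (F ^ p.1 * D F * F ^ p.2) =
      ∑ r ∈ range N, ∑ p ∈ antidiagonal r,
        coeff p.1 (f p.2) • coeff n (F ^ p.1 * D F * F ^ p.2) := by
    apply Finset.sum_subset
    · intro x; simp; omega
    · intro r _ hr
      refine Finset.sum_eq_zero fun p hp => ?_
      rw [HasAntidiagonal.mem_antidiagonal] at hp
      rw [FGF_zero F hF _ _ _ (by simp at hr; omega), smul_zero]
  rw [e, tri_box N (fun a b => coeff a (f b) • coeff n (F ^ a * D F * F ^ b)), map_sum,
    Finset.sum_comm]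
  · refine Finset.sum_congr rfl fun b _ => ?_
    rw [sum_ev_G F hF _ _ _ n N h]
  · intro a b hab
    rw [FGF_zero F hF _ _ _ (by omega), smul_zero]

lemma coeff_PP (F : A⟦X⟧) (hF : constantCoeff F = 0) (n N : ℕ) (h : n < N) :
    coeff n (PP F) = coeff n (∑ b ∈ range N, ev (cb b) F * D F * F ^ b) := by
  rw [← coeff_tri F hF cb n N h]
  simp [PP, cb, coeff_mk]

lemma D_exp (F : A⟦X⟧) (hF : constantCoeff F = 0) (n N : ℕ) (h : n < N) :
    coeff n (D (ev ex F)) = coeff n (∑ b ∈ range N, ev (db b) F * D F * F ^ b) := by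
  rw [← coeff_tri F hF db n N h, D, coeff_mk, coeff_ev _ _ hF n (n+1) (by omega),
    Finset.sum_range_succ', smul_add, Finset.smul_sum]
  have : (n:ℚ) • coeff 0 ex • coeff n (F ^ 0) = 0 := by
    rw [pow_zero, PowerSeries.coeff_one]
    split_ifs with h <;> simp [h]
  rw [this, add_zero]
  refine Finset.sum_congr rfl fun r _ => ?_
  have e : (n:ℚ) • coeff n (F ^ (r+1)) = coeff n (D (F^(r+1))) := by rw [D, coeff_mk]
  rw [smul_comm, e, D_pow, map_sum, Finset.smul_sum]
  refine Finset.sum_congr rfl fun p hp => ?_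
  rw [HasAntidiagonal.mem_antidiagonal] at hp
  rw [ex, db, coeff_mk, coeff_mk, hp]

lemma exp_PP (F : A⟦X⟧) (hF : constantCoeff F = 0) : ev ex F * PP F = D (ev ex F) := by
  ext n
  have : coeff n (ev ex F * PP F) =
      coeff n (ev ex F * (∑ b ∈ range (n+1), ev (cb b) F * D F * F ^ b)) := by
    rw [coeff_mul, coeff_mul]
    refine Finset.sum_congr rfl fun p hp => ?_
    rw [HasAntidiagonal.mem_antidiagonal] at hp
    rw [coeff_PP F hF _ (n+1) (by omega)]
  rw [this, D_exp F hF n (n+1) (by omega), Finset.mul_sum]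
  simp_rw [← mul_assoc, ev_mul _ _ F hF, ex_cb]

/-- sums over lists of length `r` and sum `n` -/
def CC (r n : ℕ) (g : List ℕ → A) : A :=
  ∑ x ∈ Finset.Nat.antidiagonalTuple r n, g (List.ofFn x)

lemma CC_succ (r n : ℕ) (g : List ℕ → A) :
    CC (r+1) n g = ∑ p ∈ antidiagonal n, CC r p.2 (fun L => g (p.1 :: L)) := by
  simp only [CC]
  rw [Finset.sum_sigma']
  symm
  refine Finset.sum_bij' (fun x _ => Fin.cons x.1.1 x.2)
    (fun y _ => ⟨(y 0, ∑ i, Fin.tail y i), Fin.tail y⟩) ?_ ?_ ?_ ?_ ?_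
  · rintro ⟨⟨a, b⟩, x⟩ hx
    simp [Finset.Nat.mem_antidiagonalTuple] at hx ⊢
    omega
  · intro y hy
    simp [Finset.Nat.mem_antidiagonalTuple] at hy ⊢
    rw [Fin.sum_univ_succ] at hy
    exact hy
  · rintro ⟨⟨a, b⟩, x⟩ hx
    simp [Finset.Nat.mem_antidiagonalTuple] at hx ⊢
    exact hx.2
  · intro y hy
    simp
  · rintro ⟨⟨a, b⟩, x⟩ hx
    simp [List.ofFn_succ]

lemma CC_comp (r n : ℕ) (g : List ℕ → A) (hg : ∀ L, 0 ∈ L → g L = 0) :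
    CC r n g = ∑ K : Composition n with K.length = r, g K.blocks := by
  rw [CC, ← Finset.sum_filter_of_ne (p := fun x : Fin r → ℕ => 0 ∉ List.ofFn x)]
  · refine Finset.sum_bij (fun x hx => ⟨List.ofFn x, ?_, ?_⟩) ?_ ?_ ?_ ?_
    · intro i hi
      simp only [Finset.mem_filter] at hx
      rcases Nat.eq_zero_or_pos i with h | h
      · subst h; exact absurd hi hx.2
      · exact h
    · simp only [Finset.mem_filter, Finset.Nat.mem_antidiagonalTuple] at hx
      rw [List.sum_ofFn]; exact hx.1
    · intro x hx
      simp [Composition.length]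
    · intro x hx y hy h
      simp only [Composition.mk.injEq] at h
      exact List.ofFn_injective h
    · intro K hK
      simp only [Finset.mem_filter, Finset.mem_univ, true_and] at hK
      subst hK
      refine ⟨K.blocksFun, ?_, ?_⟩
      · simp only [Finset.mem_filter, Finset.Nat.mem_antidiagonalTuple, K.ofFn_blocksFun,
          K.sum_blocksFun, true_and]
        intro h
        exact absurd (K.blocks_pos h) (by simp)
      · ext1; simp [K.ofFn_blocksFun]
    · intro x hx; rfl
  · intro x _ hx h0
    exact hx (hg _ h0)

def ww (F : A⟦X⟧) (L : List ℕ) : A := (L.map fun k => coeff k F).prod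

lemma ww_zero (F : A⟦X⟧) (hF : constantCoeff F = 0) (L : List ℕ) (h : 0 ∈ L) : ww F L = 0 := by
  apply List.prod_eq_zero
  rw [List.mem_map]
  exact ⟨0, h, by simpa using hF⟩

lemma coeff_mul_CC (F H : A⟦X⟧) (r n : ℕ) (g g' : List ℕ → A)
    (hH : ∀ m, coeff m H = CC r m g) (hg : ∀ k L, g' (k :: L) = coeff k F * g L) :
    coeff n (F * H) = CC (r+1) n g' := by
  rw [CC_succ, coeff_mul]
  refine Finset.sum_congr rfl fun p _ => ?_
  rw [hH, CC, CC, Finset.mul_sum]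
  simp_rw [hg]

lemma coeff_pow_CC (F : A⟦X⟧) (r : ℕ) : ∀ n, coeff n (F ^ r) = CC r n (ww F) := by
  induction r with
  | zero =>
    intro n
    cases n with
    | zero => simp [CC, ww]
    | succ n => simp [CC, PowerSeries.coeff_one]
  | succ r ih =>
    intro n
    rw [pow_succ']
    exact coeff_mul_CC F _ r n _ _ ih (fun k L => by simp [ww])

lemma coeff_FGF_CC (F : A⟦X⟧) (a b : ℕ) : ∀ n, coeff n (F ^ a * D F * F ^ b) =
    CC (a + b + 1) n (fun L => (L.getD a 0 : ℚ) • ww F L) := by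
  induction a with
  | zero =>
    intro n
    rw [pow_zero, one_mul, zero_add]
    exact coeff_mul_CC _ _ b n _ _ (coeff_pow_CC F b) (fun k L => by simp [ww, D])
  | succ a ih =>
    intro n
    rw [pow_succ', mul_assoc, mul_assoc, ← mul_assoc (F ^ a), show a + 1 + b + 1 = (a + b + 1) + 1 by ring]
    exact coeff_mul_CC _ _ _ n _ _ ih (fun k L => by simp [ww])

lemma sum_comp_length {n : ℕ} (hn : 1 ≤ n) (f : Composition n → A) :
    ∑ K, f K = ∑ r ∈ range n, ∑ K : Composition n with K.length = r + 1, f K := by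
  have : ∀ K ∈ (Finset.univ : Finset (Composition n)), K.length - 1 ∈ range n := by
    intro K _
    have := K.length_le
    simp; omega
  rw [← Finset.sum_fiberwise_of_maps_to this]
  refine Finset.sum_congr rfl fun r _ => Finset.sum_congr ?_ fun _ _ => rfl
  ext K
  have := K.length_pos_of_pos hn
  simp; omega

end aux

open PowerSeries in
/-- the generating series of the `S n`, minus one -/
def uS : PowerSeries Sym := PowerSeries.mk fun n => if n = 0 then 0 else S n

open PowerSeries in
lemma uS_const : constantCoeff uS = 0 := by
  rw [← coeff_zero_eq_constantCoeff_apply, uS, coeff_mk]; simp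

open PowerSeries in
lemma coeff_FF (n : ℕ) : coeff n (ev lg uS) = ((n : ℚ)⁻¹) • Phi n := by
  rcases Nat.eq_zero_or_pos n with h | hn
  · subst h
    simpa using ev_const lg uS lg_const
  · rw [coeff_ev _ _ uS_const n (n+1) (by omega), Finset.sum_range_succ', Phi,
      sum_comp_length hn, Finset.smul_sum]
    have h0 : coeff 0 lg = 0 := by simpa using lg_const
    rw [h0, zero_smul, add_zero]
    refine Finset.sum_congr rfl fun r _ => ?_
    rw [coeff_pow_CC, CC_comp _ _ _ (ww_zero uS uS_const), Finset.smul_sum, Finset.smul_sum]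
    refine Finset.sum_congr rfl fun K hK => ?_
    simp only [Finset.mem_filter, Finset.mem_univ, true_and] at hK
    rw [smul_smul, hK]
    congr 1
    · have : (n:ℚ) ≠ 0 := by positivity
      rw [lg, coeff_mk]
      field_simp
    · rw [ww, SProd]
      congr 1
      refine List.map_congr_left fun k hk => ?_
      have := K.blocks_pos hk
      rw [uS, coeff_mk, if_neg (by omega)]

lemma ww_Phi (L : List ℕ) : ww (ev lg uS) L = ((L.prod : ℚ)⁻¹) • PhiProd L := by
  induction L with
  | nil => simp [ww, PhiProd]
  | cons k L ih =>
    have e : ww (ev lg uS) (k :: L) = PowerSeries.coeff k (ev lg uS) * ww (ev lg uS) L := by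
      simp [ww]
    have e2 : PhiProd (k :: L) = Phi k * PhiProd L := by simp [PhiProd]
    rw [e, e2, ih, coeff_FF, smul_mul_smul_comm, List.prod_cons]
    push_cast
    rw [mul_inv]

open PowerSeries in
lemma coeff_PP_Phi (n : ℕ) (hn : 1 ≤ n) : coeff n (PP (ev lg uS)) =
    ∑ K : Composition n,
        (cCoeff K.blocks /
            ((Nat.factorial K.length : ℚ) * (K.blocks.prod : ℚ))) • PhiProd K.blocks := by
  rw [PP, coeff_mk, sum_comp_length hn]
  refine Finset.sum_congr rfl fun r _ => ?_
  have h1 : ∀ p ∈ antidiagonal r,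
      ((-1) ^ p.1 * ((p.1 + p.2).choose p.1 : ℚ) / ((p.1 + p.2 + 1).factorial : ℚ)) •
        coeff n ((ev lg uS) ^ p.1 * D (ev lg uS) * (ev lg uS) ^ p.2) =
      ∑ K : Composition n with K.length = r + 1,
        ((-1) ^ p.1 * (r.choose p.1 : ℚ) / ((r + 1).factorial : ℚ)) •
          (K.blocks.getD p.1 0 : ℚ) • ((K.blocks.prod : ℚ)⁻¹) • PhiProd K.blocks := by
    intro p hp
    rw [HasAntidiagonal.mem_antidiagonal] at hp
    rw [coeff_FGF_CC, hp, CC_comp, Finset.smul_sum]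
    · simp_rw [ww_Phi]
    · intro L hL
      rw [ww_zero _ (ev_const lg uS lg_const) L hL, smul_zero]
  rw [Finset.sum_congr rfl h1, Finset.sum_comm]
  refine Finset.sum_congr rfl fun K hK => ?_
  simp only [Finset.mem_filter, Finset.mem_univ, true_and] at hK
  rw [Finset.Nat.sum_antidiagonal_eq_sum_range_succ_mk]
  simp_rw [smul_smul]
  rw [← Finset.sum_smul]
  congr 1
  have hl : K.blocks.length = r + 1 := hK
  rw [cCoeff, hl, hK, Finset.sum_div]
  refine Finset.sum_congr rfl fun i _ => ?_
  rw [Nat.add_sub_cancel, div_eq_mul_inv, div_eq_mul_inv, mul_inv]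
  ring

open PowerSeries in
lemma P_rec (n : ℕ) (hn : 1 ≤ n) :
    (n : ℚ) • S n = ∑ k ∈ Finset.range n, S k * coeff (n - k) (PP (ev lg uS)) := by
  have hS : ∀ k, coeff k (1 + uS) = S k := by
    intro k
    rw [map_add, PowerSeries.coeff_one, uS, coeff_mk]
    split_ifs with h
    · simp [h, S]
    · simp
  have h := congrArg (coeff n) (exp_PP (ev lg uS) (ev_const lg uS lg_const))
  rw [exp_log _ uS_const, D, coeff_mk, hS, coeff_mul,
    Finset.Nat.sum_antidiagonal_eq_sum_range_succ_mk, Finset.sum_range_succ] at h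
  simp_rw [hS] at h
  rw [← h, Nat.sub_self]
  simp [PP]

/-- **Expansion of the first-kind power sums in the second-kind power sums**
(continuous Baker–Campbell–Hausdorff formula): if `Ψ` satisfies the defining recursion
`n·S_n = ∑_{k=0}^{n−1} S_k Ψ_{n−k}`, then for every `n ≥ 1`,
`Ψ_n = ∑_{|K|=n} c_K Φ^K / (ℓ(K)!·π(K))` where `π(K)` is the product of the parts
of `K`. -/
theorem psi_in_phi_basis
    (Ψ : ℕ → Sym)
    (hΨ : ∀ n : ℕ, 1 ≤ n → (n : ℚ) • S n = ∑ k ∈ Finset.range n, S k * Ψ (n - k)) :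
    ∀ n : ℕ, 1 ≤ n →
      Ψ n = ∑ K : Composition n,
        (cCoeff K.blocks /
            ((Nat.factorial K.length : ℚ) * (K.blocks.prod : ℚ))) • PhiProd K.blocks := by
  intro n
  induction n using Nat.strong_induction_on with
  | _ n ih =>
    intro hn
    have h1 := hΨ n hn
    rw [P_rec n hn] at h1
    obtain ⟨m, rfl⟩ : ∃ m, n = m + 1 := ⟨n - 1, by omega⟩
    rw [Finset.sum_range_succ', Finset.sum_range_succ'] at h1
    have h2 : ∀ k ∈ Finset.range m, S (k+1) * PowerSeries.coeff (m + 1 - (k+1)) (PP (ev lg uS)) =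
        S (k+1) * Ψ (m + 1 - (k+1)) := by
      intro k hk
      have hk' := Finset.mem_range.1 hk
      rw [ih _ (by omega) (by omega), coeff_PP_Phi _ (by omega)]
    rw [Finset.sum_congr rfl h2] at h1
    have h3 := add_left_cancel h1
    rw [← coeff_PP_Phi _ hn]
    simpa [S] using h3.symm

end

end NCSF
end
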